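/- Assume f ∈ L^∞(Ω) and u ∈ H²(Ω). Then there exists N₀ such that for every N ≥ N₀ there exists at least one N-element mesh that is equidistributing for the adaptation function ρ computed from its own finite element solution; that is, a mesh 0 = x₀ < ⋯ < x_N = 1 such that, with u_h its finite element solution and ρ_i, σ_h defined from u_h, the relations ρ_i h_i = σ_h / N hold for i = 1, …, N. -/

import Mathlib

/-!
Setting of Huang–He, "Error analysis for equidistributing meshes":
the boundary value problem  −(a u')' + b u' + c u = f on Ω = (0,1), u(0)=u(1)=0,
its linear finite element discretization on a mesh 0 = x₀ < ⋯ < x_N = 1,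
and the residual-based equidistribution quantities.
-/

noncomputable section
open MeasureTheory Real

namespace EquidMesh

/-- L² norm on (0,1). -/
def L2 (g : ℝ → ℝ) : ℝ := Real.sqrt (∫ t in (0:ℝ)..1, (g t)^2)

/-- L¹ norm on (0,1). -/
def L1 (g : ℝ → ℝ) : ℝ := ∫ t in (0:ℝ)..1, |g t|

/-- The L^{2/3} quasi-norm on (0,1): (∫₀¹ |g|^{2/3})^{3/2}. -/
def Lp23 (g : ℝ → ℝ) : ℝ := (∫ t in (0:ℝ)..1, |g t| ^ ((2:ℝ)/3)) ^ ((3:ℝ)/2)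

/-- L^∞ norm (essential supremum of |g|) on (0,1). -/
def Linf (g : ℝ → ℝ) : ℝ := essSup (fun t => |g t|) (volume.restrict (Set.Ioo (0:ℝ) 1))

/-- Membership in L²(0,1). -/
def MemL2 (g : ℝ → ℝ) : Prop :=
  Measurable g ∧ IntervalIntegrable (fun t => (g t)^2) volume 0 1

/-- Membership in L^∞(0,1). -/
def MemLinf (g : ℝ → ℝ) : Prop :=
  Measurable g ∧ ∃ M : ℝ, ∀ᵐ x ∂(volume.restrict (Set.Ioo (0:ℝ) 1)), |g x| ≤ M

/-- `g` is absolutely continuous on [0,1] with derivative `g' ∈ L¹(0,1)`. -/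
def HasL1Deriv (g g' : ℝ → ℝ) : Prop :=
  Measurable g' ∧ IntervalIntegrable g' volume 0 1 ∧
    ∀ x ∈ Set.Icc (0:ℝ) 1, g x = g 0 + ∫ t in (0:ℝ)..x, g' t

/-- A function in H¹(0,1): absolutely continuous on [0,1], carried together with its
(a.e.) derivative, which lies in L²(0,1). -/
structure H1 where
  val : ℝ → ℝ
  dval : ℝ → ℝ
  dval_meas : Measurable dval
  dval_int : IntervalIntegrable dval volume 0 1
  dval_sq_int : IntervalIntegrable (fun t => (dval t)^2) volume 0 1
  ftc : ∀ x ∈ Set.Icc (0:ℝ) 1, val x = val 0 + ∫ t in (0:ℝ)..x, dval t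

/-- `u ∈ H²(0,1)`: the derivative `u'` is absolutely continuous with `u'' ∈ L²(0,1)`. -/
def H1.IsH2 (u : H1) : Prop :=
  ∃ u'' : ℝ → ℝ, Measurable u'' ∧ IntervalIntegrable u'' volume 0 1 ∧
    IntervalIntegrable (fun t => (u'' t)^2) volume 0 1 ∧
    ∀ x ∈ Set.Icc (0:ℝ) 1, u.dval x = u.dval 0 + ∫ t in (0:ℝ)..x, u'' t

/-- The coefficients of the elliptic problem on Ω = (0,1):
`a, b ∈ W^{1,∞}(Ω)`, `c ∈ L^∞(Ω)`, `a ≥ a₀ > 0`, and `c − b'/2 ≥ 0` a.e. -/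
structure Coeffs where
  a : ℝ → ℝ
  b : ℝ → ℝ
  c : ℝ → ℝ
  a' : ℝ → ℝ
  b' : ℝ → ℝ
  a0 : ℝ
  a0_pos : 0 < a0
  a_lb : ∀ x ∈ Set.Icc (0:ℝ) 1, a0 ≤ a x
  a'_meas : Measurable a'
  b'_meas : Measurable b'
  c_meas : Measurable c
  a'_int : IntervalIntegrable a' volume 0 1
  b'_int : IntervalIntegrable b' volume 0 1
  a'_bdd : ∃ M : ℝ, ∀ᵐ x ∂(volume.restrict (Set.Ioo (0:ℝ) 1)), |a' x| ≤ M
  b'_bdd : ∃ M : ℝ, ∀ᵐ x ∂(volume.restrict (Set.Ioo (0:ℝ) 1)), |b' x| ≤ M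
  c_bdd : ∃ M : ℝ, ∀ᵐ x ∂(volume.restrict (Set.Ioo (0:ℝ) 1)), |c x| ≤ M
  ftc_a : ∀ x ∈ Set.Icc (0:ℝ) 1, a x = a 0 + ∫ t in (0:ℝ)..x, a' t
  ftc_b : ∀ x ∈ Set.Icc (0:ℝ) 1, b x = b 0 + ∫ t in (0:ℝ)..x, b' t
  cb_nonneg : ∀ᵐ x ∂(volume.restrict (Set.Ioo (0:ℝ) 1)), 0 ≤ c x - b' x / 2

/-- The bilinear form B(u,v) = ∫₀¹ (a u' v' + b u' v + c u v) dx. -/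
def Coeffs.B (P : Coeffs) (u v : H1) : ℝ :=
  ∫ t in (0:ℝ)..1,
    (P.a t * u.dval t * v.dval t + P.b t * u.dval t * v.val t + P.c t * u.val t * v.val t)

/-- The right-hand side functional (f, v) = ∫₀¹ f v dx. -/
def ip (f : ℝ → ℝ) (v : H1) : ℝ := ∫ t in (0:ℝ)..1, f t * v.val t

/-- `u ∈ H¹₀(Ω)` is the weak solution: B(u,v) = (f,v) for all v ∈ H¹₀(Ω). -/
def Coeffs.IsWeakSolution (P : Coeffs) (f : ℝ → ℝ) (u : H1) : Prop :=
  u.val 0 = 0 ∧ u.val 1 = 0 ∧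
    ∀ v : H1, v.val 0 = 0 → v.val 1 = 0 → P.B u v = ip f v

/-- A mesh of N elements of Ω = (0,1): 0 = x₀ < x₁ < ⋯ < x_N = 1. -/
structure Mesh (N : ℕ) where
  x : ℕ → ℝ
  x_zero : x 0 = 0
  x_last : x N = 1
  x_mono : ∀ i < N, x i < x (i+1)

/-- Element length (the element of index `i` is `(x i, x (i+1))`, `0 ≤ i < N`). -/
def Mesh.h {N : ℕ} (m : Mesh N) (i : ℕ) : ℝ := m.x (i+1) - m.x i

/-- `v` is piecewise linear with respect to the mesh: its derivative is constant
inside each element. -/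
def Mesh.IsPL {N : ℕ} (m : Mesh N) (v : H1) : Prop :=
  ∀ i < N, ∃ s : ℝ, ∀ t ∈ Set.Ioo (m.x i) (m.x (i+1)), v.dval t = s

/-- `uh` is the linear finite element solution on the mesh `m`:
a continuous piecewise linear function vanishing at 0 and 1 with
B(u_h, v_h) = (f, v_h) for all piecewise linear v_h vanishing at 0 and 1. -/
def Coeffs.IsFESolution (P : Coeffs) (f : ℝ → ℝ) {N : ℕ} (m : Mesh N) (uh : H1) : Prop :=
  uh.val 0 = 0 ∧ uh.val 1 = 0 ∧ m.IsPL uh ∧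
    ∀ v : H1, v.val 0 = 0 → v.val 1 = 0 → m.IsPL v → P.B uh v = ip f v

/-- The residual of `w`: r = f + a' w' − b w' − c w. -/
def Coeffs.res (P : Coeffs) (f : ℝ → ℝ) (w : H1) : ℝ → ℝ :=
  fun t => f t + P.a' t * w.dval t - P.b t * w.dval t - P.c t * w.val t

/-- The element L² average ⟨g⟩_i = (h_i⁻¹ ∫_{K_i} g²)^{1/2}. -/
def Mesh.avg {N : ℕ} (m : Mesh N) (g : ℝ → ℝ) (i : ℕ) : ℝ :=
  Real.sqrt ((1 / m.h i) * ∫ t in (m.x i)..(m.x (i+1)), (g t)^2)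

/-- The intensity parameter α_h = (Σ_i h_i ⟨g⟩_i^{2/3})³. -/
def Mesh.alpha {N : ℕ} (m : Mesh N) (g : ℝ → ℝ) : ℝ :=
  (∑ i ∈ Finset.range N, m.h i * (m.avg g i) ^ ((2:ℝ)/3)) ^ 3

/-- The adaptation function value ρ_i = (1 + α_h⁻¹ ⟨g⟩_i²)^{1/3}. -/
def Mesh.rho {N : ℕ} (m : Mesh N) (g : ℝ → ℝ) (i : ℕ) : ℝ :=
  (1 + (m.alpha g)⁻¹ * (m.avg g i)^2) ^ ((1:ℝ)/3)

/-- σ_h = Σ_i ρ_i h_i. -/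
def Mesh.sigma {N : ℕ} (m : Mesh N) (g : ℝ → ℝ) : ℝ :=
  ∑ i ∈ Finset.range N, m.rho g i * m.h i

/-- The mesh equidistributes (the piecewise constant adaptation function built from) `g`:
ρ_i h_i = σ_h / N for all elements. -/
def Mesh.IsEquidistributing {N : ℕ} (m : Mesh N) (g : ℝ → ℝ) : Prop :=
  ∀ i < N, m.rho g i * m.h i = m.sigma g / (N:ℝ)

/-- Membership in the mesh set S_N: 1/(ρ₀ N) ≤ h_i ≤ 2/N for all i. -/
def Mesh.InS {N : ℕ} (m : Mesh N) (ρ0 : ℝ) : Prop :=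
  ∀ i < N, 1 / (ρ0 * (N:ℝ)) ≤ m.h i ∧ m.h i ≤ 2 / (N:ℝ)

/-- The maximum norm distance ‖X − X̃‖_∞ between two meshes with the same N. -/
def meshDist {N : ℕ} (m m' : Mesh N) : ℝ :=
  (Finset.range (N+1)).sup' (Finset.nonempty_range_iff.mpr (Nat.succ_ne_zero N))
    (fun i => |m.x i - m'.x i|)

/-- The energy norm squared ‖v‖_E² = ∫₀¹ (a v'² + (c − b'/2) v²) dx. -/
def Coeffs.energySq (P : Coeffs) (v : H1) : ℝ :=
  ∫ t in (0:ℝ)..1, (P.a t * (v.dval t)^2 + (P.c t - P.b' t / 2) * (v.val t)^2)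

section Scarf

set_option linter.unusedSectionVars false

variable {I X : Type*} [Fintype I] [DecidableEq I] [Fintype X] [DecidableEq X]

/-- A finite set `σ` is dominant for the orders induced by `r i` if no point exceeds, in every
order, the smallest element of `σ`. -/
def Dominant (r : I → X → ℕ) (σ : Finset X) : Prop :=
  ∀ y, ∃ i, ∀ x ∈ σ, r i y ≤ r i x

/-- The points which are above the `l`-minimum `μ l` for all orders `l ≠ k`. -/
def AboveMins (r : I → X → ℕ) (μ : I → X) (k : I) (y : X) : Prop :=
  ∀ l, l ≠ k → r l (μ l) < r l y

/-- `μ` selects the minima of `σ` and identifies exactly the two indices `i` and `j`. -/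
structure MinData (r : I → X → ℕ) (σ : Finset X) (μ : I → X) (i j : I) : Prop where
  ne : i ≠ j
  eq : μ i = μ j
  mem : ∀ l, μ l ∈ σ
  min : ∀ l, ∀ x ∈ σ, r l (μ l) ≤ r l x
  surj : ∀ x ∈ σ, ∃ l, μ l = x

lemma MinData.symm {r : I → X → ℕ} {σ : Finset X} {μ : I → X} {i j : I}
    (h : MinData r σ μ i j) : MinData r σ μ j i :=
  ⟨h.ne.symm, h.eq.symm, h.mem, h.min, h.surj⟩

lemma exists_minData {r : I → X → ℕ} (hr : ∀ i, Function.Injective (r i)) {σ : Finset X}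
    (hσ : Dominant r σ) (hne : σ.Nonempty) (hc : σ.card + 1 = Fintype.card I) :
    ∃ μ i j, MinData r σ μ i j := by
  have h1 : ∀ l, ∃ x ∈ σ, ∀ z ∈ σ, r l x ≤ r l z := fun l => σ.exists_min_image (r l) hne
  choose μ hμ hmin using h1
  obtain ⟨i, -, j, -, hij, he⟩ := Finset.exists_ne_map_eq_of_card_lt_of_maps_to
    (s := (Finset.univ : Finset I)) (t := σ) (by rw [Finset.card_univ]; omega)
    (f := μ) (fun l _ => hμ l)
  refine ⟨μ, i, j, hij, he, hμ, hmin, fun x hx => ?_⟩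
  obtain ⟨l, hl⟩ := hσ x
  exact ⟨l, hr l (le_antisymm (hmin l x hx) (hl _ (hμ l)))⟩

lemma MinData.mem_of_dominant_insert {r : I → X → ℕ} (hr : ∀ i, Function.Injective (r i))
    {σ : Finset X} {μ : I → X} {i j : I} (h : MinData r σ μ i j)
    (hc : σ.card + 1 = Fintype.card I) {y : X} (hy : y ∉ σ) (hd : Dominant r (insert y σ)) :
    AboveMins r μ i y ∨ AboveMins r μ j y := by
  obtain ⟨k, hk⟩ := hd y
  choose g hg using hd
  have hgk : ∀ x ∈ σ, g x ≠ k := by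
    intro x hx e
    have h1 := hg x y (Finset.mem_insert_self _ _)
    rw [e] at h1
    have h2 := hk x (Finset.mem_insert_of_mem hx)
    exact hy (hr k (le_antisymm h1 h2) ▸ hx)
  have hμg : ∀ x ∈ σ, μ (g x) = x := fun x hx =>
    hr _ (le_antisymm (h.min _ x hx) (hg x _ (Finset.mem_insert_of_mem (h.mem _))))
  have himg : σ.image g = Finset.univ.erase k := by
    apply Finset.eq_of_subset_of_card_le
    · intro l hl
      obtain ⟨x, hx, rfl⟩ := Finset.mem_image.1 hl
      exact Finset.mem_erase.2 ⟨hgk x hx, Finset.mem_univ _⟩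
    · rw [Finset.card_image_of_injOn, Finset.card_erase_of_mem (Finset.mem_univ _),
        Finset.card_univ]
      · omega
      · intro x hx x' hx' e
        rw [← hμg x hx, ← hμg x' hx', e]
  have hinv : ∀ l, l ≠ k → ∃ x ∈ σ, g x = l := by
    intro l hl
    have : l ∈ σ.image g := by rw [himg]; exact Finset.mem_erase.2 ⟨hl, Finset.mem_univ _⟩
    exact Finset.mem_image.1 this
  have habove : AboveMins r μ k y := by
    intro l hl
    obtain ⟨x, hx, rfl⟩ := hinv l hl
    rw [hμg x hx]
    refine lt_of_le_of_ne (hg x y (Finset.mem_insert_self _ _)) fun e => hy (hr _ e ▸ hx)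
  by_cases hki : k = i
  · left; rwa [← hki]
  by_cases hkj : k = j
  · right; rwa [← hkj]
  exfalso
  obtain ⟨x, hx, hxi⟩ := hinv i (Ne.symm hki)
  obtain ⟨x', hx', hxj⟩ := hinv j (Ne.symm hkj)
  have e1 : μ i = x := by rw [← hxi]; exact hμg x hx
  have e2 : μ j = x' := by rw [← hxj]; exact hμg x' hx'
  have e3 : x = x' := by rw [← e1, ← e2, h.eq]
  exact h.ne (by rw [← hxi, ← hxj, e3])

lemma MinData.le_of_dominant_insert {r : I → X → ℕ} {σ : Finset X} {μ : I → X} {i j : I}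
    (h : MinData r σ μ i j) {y : X} (hd : Dominant r (insert y σ)) {k : I} {z : X}
    (hz : AboveMins r μ k z) : r k z ≤ r k y := by
  obtain ⟨l, hl⟩ := hd z
  by_cases hlk : l = k
  · rw [← hlk]; exact hl y (Finset.mem_insert_self _ _)
  · exact absurd (hl _ (Finset.mem_insert_of_mem (h.mem l))) (not_le.2 (hz l hlk))

lemma MinData.dominant_insert {r : I → X → ℕ} {σ : Finset X} {μ : I → X} {i j : I}
    (h : MinData r σ μ i j) (hσ : Dominant r σ) {y : X} (hy : AboveMins r μ i y)
    (hmax : ∀ z, AboveMins r μ i z → r i z ≤ r i y) : y ∉ σ ∧ Dominant r (insert y σ) := by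
  constructor
  · intro hyσ
    obtain ⟨l, hl⟩ := h.surj y hyσ
    by_cases hli : l = i
    · have := hy j h.ne.symm
      rw [← h.eq, ← hli, hl] at this
      exact lt_irrefl _ this
    · have := hy l hli
      rw [hl] at this
      exact lt_irrefl _ this
  · intro z
    have key : ∀ l, l ≠ i → r l z ≤ r l (μ l) → ∃ i, ∀ x ∈ insert y σ, r i z ≤ r i x := by
      intro l hl hz
      refine ⟨l, fun x hx => ?_⟩
      rcases Finset.mem_insert.1 hx with rfl | hx
      · exact hz.trans (hy l hl).le
      · exact hz.trans (h.min l x hx)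
    obtain ⟨l, hl⟩ := hσ z
    by_cases hli : l = i
    · by_cases hzM : AboveMins r μ i z
      · refine ⟨i, fun x hx => ?_⟩
        rcases Finset.mem_insert.1 hx with rfl | hx
        · exact hmax z hzM
        · rw [← hli]; exact hl x hx
      · unfold AboveMins at hzM
        push Not at hzM
        obtain ⟨l', hl', hz'⟩ := hzM
        exact key l' hl' hz'
    · exact key l hli (hl _ (h.mem l))

lemma MinData.not_aboveMins {r : I → X → ℕ} {σ : Finset X} {μ : I → X} {i j : I}
    (h : MinData r σ μ i j) (hσ : Dominant r σ) {y : X} (hy : AboveMins r μ i y) :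
    ¬ AboveMins r μ j y := by
  intro hy'
  obtain ⟨l, hl⟩ := hσ y
  by_cases hli : l = i
  · exact absurd (hl _ (h.mem l)) (not_le.2 (hy' l (by rw [hli]; exact h.ne)))
  · exact absurd (hl _ (h.mem l)) (not_le.2 (hy l hli))

lemma MinData.exists_dominant_insert {r : I → X → ℕ} (hr : ∀ i, Function.Injective (r i))
    {σ : Finset X} {μ : I → X} {i j : I}
    (h : MinData r σ μ i j) (hσ : Dominant r σ) (hne : ∃ y, AboveMins r μ i y) :
    ∃ y, AboveMins r μ i y ∧ y ∉ σ ∧ Dominant r (insert y σ) ∧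
      ∀ z, AboveMins r μ i z → Dominant r (insert z σ) → z = y := by
  classical
  obtain ⟨y0, hy0⟩ := hne
  obtain ⟨y, hy, hmax⟩ := (Finset.univ.filter (AboveMins r μ i)).exists_max_image (r i)
    ⟨y0, by simpa using hy0⟩
  have hy' : AboveMins r μ i y := by simpa using hy
  have hd := h.dominant_insert hσ hy' (fun z hz => hmax z (by simpa using hz))
  refine ⟨y, hy', hd.1, hd.2, fun z hz hdz => hr i (le_antisymm ?_ ?_)⟩
  · exact h.le_of_dominant_insert hd.2 hz
  · exact h.le_of_dominant_insert hdz hy'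

open Classical in
/-- The number of dominant one-point extensions of `σ`. -/
def extensions (r : I → X → ℕ) (σ : Finset X) : Finset X :=
  Finset.univ.filter fun y => y ∉ σ ∧ Dominant r (insert y σ)

lemma MinData.card_extensions_eq_two {r : I → X → ℕ} (hr : ∀ i, Function.Injective (r i))
    {σ : Finset X} {μ : I → X} {i j : I} (hc : σ.card + 1 = Fintype.card I)
    (h : MinData r σ μ i j) (hσ : Dominant r σ) (hi : ∃ y, AboveMins r μ i y)
    (hj : ∃ y, AboveMins r μ j y) : (extensions r σ).card = 2 := by
  classical
  obtain ⟨y, hy, hyσ, hyd, hyu⟩ := h.exists_dominant_insert hr hσ hi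
  obtain ⟨z, hz, hzσ, hzd, hzu⟩ := h.symm.exists_dominant_insert hr hσ hj
  rw [Finset.card_eq_two]
  refine ⟨y, z, fun e => h.not_aboveMins hσ hy (e ▸ hz), ?_⟩
  ext w
  simp only [extensions, Finset.mem_filter, Finset.mem_univ, true_and, Finset.mem_insert,
    Finset.mem_singleton]
  constructor
  · rintro ⟨hw, hwd⟩
    rcases h.mem_of_dominant_insert hr hc hw hwd with hwi | hwj
    · exact Or.inl (hyu w hwi hwd)
    · exact Or.inr (hzu w hwj hwd)
  · rintro (rfl | rfl)
    · exact ⟨hyσ, hyd⟩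
    · exact ⟨hzσ, hzd⟩

lemma MinData.card_extensions_eq_one {r : I → X → ℕ} (hr : ∀ i, Function.Injective (r i))
    {σ : Finset X} {μ : I → X} {i j : I} (hc : σ.card + 1 = Fintype.card I)
    (h : MinData r σ μ i j) (hσ : Dominant r σ) (hi : ∃ y, AboveMins r μ i y)
    (hj : ¬ ∃ y, AboveMins r μ j y) : (extensions r σ).card = 1 := by
  classical
  obtain ⟨y, hy, hyσ, hyd, hyu⟩ := h.exists_dominant_insert hr hσ hi
  rw [Finset.card_eq_one]
  refine ⟨y, ?_⟩
  ext w
  simp only [extensions, Finset.mem_filter, Finset.mem_univ, true_and, Finset.mem_singleton]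
  constructor
  · rintro ⟨hw, hwd⟩
    rcases h.mem_of_dominant_insert hr hc hw hwd with hwi | hwj
    · exact hyu w hwi hwd
    · exact absurd ⟨w, hwj⟩ hj
  · rintro rfl
    exact ⟨hyσ, hyd⟩

/-- `e` is a family of extreme points: `e i` is the least point for the order `i`, and lies above
all the other (non-extreme) points for the remaining orders. -/
structure IsExtreme (r : I → X → ℕ) (e : I → X) : Prop where
  least : ∀ i y, y ≠ e i → r i (e i) < r i y
  above : ∀ i j y, i ≠ j → y ∉ Set.range e → r i y < r i (e j)

lemma IsExtreme.injective {r : I → X → ℕ} {e : I → X} (he : IsExtreme r e) {p : X}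
    (hp : p ∉ Set.range e) : Function.Injective e := by
  intro i j h
  by_contra hij
  have h1 := he.above i j p hij hp
  rw [← h] at h1
  exact absurd (he.least i p (fun h => hp ⟨i, h.symm⟩)) (not_lt.2 h1.le)

/-- A colored face that is not a face of extreme points has exactly two dominant extensions. -/
lemma IsExtreme.card_extensions_eq_two {r : I → X → ℕ} (hr : ∀ i, Function.Injective (r i))
    {e : I → X} (he : IsExtreme r e) {σ : Finset X} (hc : σ.card + 1 = Fintype.card I)
    (hσ : Dominant r σ) {x : X} (hx : x ∈ σ) (hxe : x ∉ Set.range e) :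
    (extensions r σ).card = 2 := by
  obtain ⟨μ, i, j, h⟩ := exists_minData hr hσ ⟨x, hx⟩ hc
  have key : ∀ {i j}, MinData r σ μ i j → ∃ y, AboveMins r μ i y := by
    intro i j h
    exact ⟨e i, fun l hl => lt_of_le_of_lt (h.min l x hx) (he.above l i x hl hxe)⟩
  exact h.card_extensions_eq_two hr hc hσ (key h) (key h.symm)

/-- The face spanned by all extreme points but one has exactly one dominant extension. -/
lemma IsExtreme.card_extensions_eq_one {r : I → X → ℕ} (hr : ∀ i, Function.Injective (r i))
    {e : I → X} (he : IsExtreme r e) {p : X} (hp : p ∉ Set.range e) (i₀ : I)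
    (hn : 2 ≤ Fintype.card I)
    (hc : ((Finset.univ.erase i₀).image e).card + 1 = Fintype.card I)
    (hσ : Dominant r ((Finset.univ.erase i₀).image e)) :
    (extensions r ((Finset.univ.erase i₀).image e)).card = 1 := by
  set σ := (Finset.univ.erase i₀).image e with hσdef
  have hinj := he.injective hp
  have hmem : ∀ l, l ≠ i₀ → e l ∈ σ := fun l hl =>
    Finset.mem_image_of_mem _ (Finset.mem_erase.2 ⟨hl, Finset.mem_univ _⟩)
  have hmem' : ∀ x ∈ σ, ∃ l, l ≠ i₀ ∧ e l = x := by
    intro x hx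
    obtain ⟨l, hl, rfl⟩ := Finset.mem_image.1 hx
    exact ⟨l, (Finset.mem_erase.1 hl).1, rfl⟩
  obtain ⟨μ, i, j, h⟩ := exists_minData hr hσ (Finset.card_pos.1 (by omega)) hc
  have hμ : ∀ l, l ≠ i₀ → μ l = e l := by
    intro l hl
    by_contra hne
    exact absurd (h.min l _ (hmem l hl)) (not_le.2 (he.least l _ hne))
  have main : ∀ {j}, MinData r σ μ i₀ j → (extensions r σ).card = 1 := by
    intro j h
    refine h.card_extensions_eq_one hr hc hσ ⟨p, fun l hl => ?_⟩ ?_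
    · rw [hμ l hl]
      exact he.least l p (fun h => hp ⟨l, h.symm⟩)
    · rintro ⟨y, hy⟩
      have hj : j ≠ i₀ := h.ne.symm
      have hyi := hy i₀ h.ne
      rw [h.eq, hμ j hj] at hyi
      by_cases hye : y ∈ Set.range e
      · obtain ⟨l, rfl⟩ := hye
        by_cases hl0 : l = i₀
        · subst hl0
          exact absurd (he.least l _ (fun h => hj (hinj h))) (not_lt.2 hyi.le)
        · by_cases hlj : l = j
          · subst hlj; exact lt_irrefl _ hyi
          · have := hy l hlj
            rw [hμ l hl0] at this
            exact lt_irrefl _ this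
      · exact absurd (he.above i₀ j y h.ne hye) (not_lt.2 hyi.le)
  by_cases hi : i = i₀
  · subst hi; exact main h
  by_cases hj : j = i₀
  · subst hj; exact main h.symm
  exact absurd (hinj (by rw [← hμ i hi, ← hμ j hj, h.eq])) h.ne

open Classical in
/-- If `τ` is not rainbow then it has an even number of facets with colors `univ \ {i₀}`. -/
lemma even_card_facets (c : X → I) (i₀ : I) {τ : Finset X} (hτ : τ.card = Fintype.card I)
    (hnot : τ.image c ≠ Finset.univ) :
    Even (τ.filter fun x => (τ.erase x).image c = Finset.univ.erase i₀).card := by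
  rcases Finset.eq_empty_or_nonempty
    (τ.filter fun x => (τ.erase x).image c = Finset.univ.erase i₀) with h0 | ⟨x, hx⟩
  · rw [h0]; simp
  obtain ⟨hxτ, hx⟩ := Finset.mem_filter.1 hx
  have hcard : (τ.erase x).card = (Finset.univ.erase i₀).card := by
    rw [Finset.card_erase_of_mem hxτ, Finset.card_erase_of_mem (Finset.mem_univ _), hτ,
      Finset.card_univ]
  have hinj : Set.InjOn c (τ.erase x) := by
    rw [← Finset.card_image_iff, hx, hcard]
  have hcx : c x ≠ i₀ := by
    intro h
    apply hnot
    rw [← Finset.insert_erase hxτ, Finset.image_insert, hx, h,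
      Finset.insert_erase (Finset.mem_univ _)]
  have : c x ∈ (τ.erase x).image c := by
    rw [hx]; exact Finset.mem_erase.2 ⟨hcx, Finset.mem_univ _⟩
  obtain ⟨x', hx', hcx'⟩ := Finset.mem_image.1 this
  obtain ⟨hne, hx'τ⟩ := Finset.mem_erase.1 hx'
  suffices h : (τ.filter fun x => (τ.erase x).image c = Finset.univ.erase i₀) = {x, x'} by
    rw [h, Finset.card_pair hne.symm]; exact even_two
  ext z
  simp only [Finset.mem_filter, Finset.mem_insert, Finset.mem_singleton]
  constructor
  · rintro ⟨hzτ, hz⟩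
    by_contra! hcon
    have hzx : c z ∈ (τ.erase z).image c := by
      rw [hz, ← hx]; exact Finset.mem_image_of_mem _ (Finset.mem_erase.2 ⟨hcon.1, hzτ⟩)
    obtain ⟨w, hw, hwz⟩ := Finset.mem_image.1 hzx
    obtain ⟨hwz', hwτ⟩ := Finset.mem_erase.1 hw
    by_cases hwx : w = x
    · subst hwx
      exact hcon.2 (hinj (Finset.mem_coe.2 (Finset.mem_erase.2 ⟨hcon.1, hzτ⟩))
        (Finset.mem_coe.2 hx') (by rw [← hwz, hcx']))
    · exact hwz' (hinj (Finset.mem_coe.2 (Finset.mem_erase.2 ⟨hwx, hwτ⟩))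
        (Finset.mem_coe.2 (Finset.mem_erase.2 ⟨hcon.1, hzτ⟩)) hwz)
  · rintro (rfl | rfl)
    · exact ⟨hxτ, hx⟩
    · refine ⟨hx'τ, ?_⟩
      rw [← hx]
      ext l
      simp only [Finset.mem_image, Finset.mem_erase]
      constructor
      · rintro ⟨w, ⟨hw, hwτ⟩, rfl⟩
        by_cases hwx : w = x
        · subst hwx; exact ⟨z, ⟨hne, hx'τ⟩, hcx'⟩
        · exact ⟨w, ⟨hwx, hwτ⟩, rfl⟩
      · rintro ⟨w, ⟨hw, hwτ⟩, rfl⟩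
        by_cases hwx : w = z
        · subst hwx; exact ⟨x, ⟨fun h => hw h.symm, hxτ⟩, hcx'.symm⟩
        · exact ⟨w, ⟨hwx, hwτ⟩, rfl⟩

open Classical in
/-- **Scarf's lemma**: there is a dominant set whose elements carry every color exactly once. -/
theorem exists_dominant_rainbow {r : I → X → ℕ} (hr : ∀ i, Function.Injective (r i))
    {e : I → X} (he : IsExtreme r e) {p : X} (hp : p ∉ Set.range e) (c : X → I)
    (hce : ∀ i, c (e i) = i) (hn : 2 ≤ Fintype.card I) :
    ∃ τ : Finset X, τ.card = Fintype.card I ∧ Dominant r τ ∧ τ.image c = Finset.univ := by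
  by_contra! hcon
  have hinj := he.injective hp
  obtain ⟨i₀⟩ : Nonempty I := Fintype.card_pos_iff.1 (by omega)
  set σ₀ := (Finset.univ.erase i₀).image e with hσ₀
  set rooms := (Finset.univ : Finset (Finset X)).filter
    fun τ => τ.card = Fintype.card I ∧ Dominant r τ with hrooms
  set doors := (Finset.univ : Finset (Finset X)).filter
    fun σ => σ.card + 1 = Fintype.card I ∧ Dominant r σ ∧ σ.image c = Finset.univ.erase i₀
    with hdoors
  have hcount := Finset.sum_card_bipartiteAbove_eq_sum_card_bipartiteBelow
    (s := doors) (t := rooms) (fun σ τ => σ ⊆ τ)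
  have hroom : ∀ τ ∈ rooms, Even (doors.bipartiteBelow (fun σ τ => σ ⊆ τ) τ).card := by
    intro τ hτ
    obtain ⟨-, hτc, hτd⟩ := Finset.mem_filter.1 hτ
    have := even_card_facets c i₀ hτc (hcon τ hτc hτd)
    convert this using 1
    symm
    refine Finset.card_bij (fun x _ => τ.erase x) ?_ ?_ ?_
    · intro x hx
      obtain ⟨hxτ, hx⟩ := Finset.mem_filter.1 hx
      refine Finset.mem_filter.2 ⟨Finset.mem_filter.2 ⟨Finset.mem_univ _, ?_, ?_, hx⟩,
        Finset.erase_subset _ _⟩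
      · rw [Finset.card_erase_of_mem hxτ]; omega
      · intro y
        obtain ⟨i, hi⟩ := hτd y
        exact ⟨i, fun x hx => hi x (Finset.mem_of_mem_erase hx)⟩
    · intro x hx y hy h
      exact (Finset.erase_inj τ (Finset.mem_filter.1 hx).1).1 h
    · intro σ hσ
      obtain ⟨hσ, hsub⟩ := Finset.mem_filter.1 hσ
      obtain ⟨-, hσc, hσd, hσi⟩ := Finset.mem_filter.1 hσ
      have : (τ \ σ).card = 1 := by
        rw [Finset.card_sdiff_of_subset hsub]; omega
      obtain ⟨x, hx⟩ := Finset.card_eq_one.1 this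
      have he : τ.erase x = σ := by
        rw [← Finset.sdiff_singleton_eq_erase, ← hx, Finset.sdiff_sdiff_eq_self hsub]
      have hxm : x ∈ τ \ σ := by rw [hx]; exact Finset.mem_singleton_self _
      exact ⟨x, Finset.mem_filter.2 ⟨(Finset.mem_sdiff.1 hxm).1, by rw [he, hσi]⟩, he⟩
  have hdoor : ∀ σ ∈ doors, (rooms.bipartiteAbove (fun σ τ => σ ⊆ τ) σ).card
      = (extensions r σ).card := by
    intro σ hσ
    obtain ⟨-, hσc, hσd, hσi⟩ := Finset.mem_filter.1 hσ
    symm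
    refine Finset.card_bij (fun y _ => insert y σ) ?_ ?_ ?_
    · intro y hy
      obtain ⟨-, hyσ, hyd⟩ := Finset.mem_filter.1 hy
      refine Finset.mem_filter.2 ⟨Finset.mem_filter.2 ⟨Finset.mem_univ _, ?_, hyd⟩,
        Finset.subset_insert _ _⟩
      rw [Finset.card_insert_of_notMem hyσ, hσc]
    · intro x hx y hy h
      exact (Finset.insert_inj (Finset.mem_filter.1 hx).2.1).1 h
    · intro τ hτ
      obtain ⟨hτ, hsub⟩ := Finset.mem_filter.1 hτ
      obtain ⟨-, hτc, hτd⟩ := Finset.mem_filter.1 hτ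
      have : (τ \ σ).card = 1 := by
        rw [Finset.card_sdiff_of_subset hsub]; omega
      obtain ⟨x, hx⟩ := Finset.card_eq_one.1 this
      have he : insert x σ = τ := by
        rw [Finset.insert_eq, ← hx, Finset.sdiff_union_of_subset hsub]
      have hxm : x ∈ τ \ σ := by rw [hx]; exact Finset.mem_singleton_self _
      exact ⟨x, Finset.mem_filter.2 ⟨Finset.mem_univ _, (Finset.mem_sdiff.1 hxm).2,
        by rw [he]; exact hτd⟩, he⟩
  have hσ₀c : σ₀.card + 1 = Fintype.card I := by
    rw [hσ₀, Finset.card_image_of_injective _ hinj, Finset.card_erase_of_mem (Finset.mem_univ _),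
      Finset.card_univ]
    omega
  have hσ₀d : Dominant r σ₀ := by
    intro y
    by_cases hy : y ∈ Set.range e
    · obtain ⟨l, rfl⟩ := hy
      refine ⟨l, fun x _ => ?_⟩
      by_cases hxe : x = e l
      · rw [hxe]
      · exact (he.least l x hxe).le
    · refine ⟨i₀, fun x hx => ?_⟩
      obtain ⟨l, hl, rfl⟩ := Finset.mem_image.1 hx
      exact (he.above i₀ l y (Finset.mem_erase.1 hl).1.symm hy).le
  have hσ₀m : σ₀ ∈ doors := by
    refine Finset.mem_filter.2 ⟨Finset.mem_univ _, hσ₀c, hσ₀d, ?_⟩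
    rw [hσ₀, Finset.image_image]
    have : c ∘ e = id := funext hce
    rw [this, Finset.image_id]
  have hodd : Odd (∑ σ ∈ doors, (rooms.bipartiteAbove (fun σ τ => σ ⊆ τ) σ).card) := by
    rw [← Finset.add_sum_erase _ _ hσ₀m, hdoor σ₀ hσ₀m,
      he.card_extensions_eq_one hr hp i₀ hn hσ₀c hσ₀d, add_comm]
    apply Even.add_one
    apply Finset.even_sum
    intro σ hσ
    obtain ⟨hσne, hσ⟩ := Finset.mem_erase.1 hσ
    rw [hdoor σ hσ]
    obtain ⟨-, hσc, hσd, hσi⟩ := Finset.mem_filter.1 hσ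
    have : ∃ x ∈ σ, x ∉ Set.range e := by
      by_contra! hall
      apply hσne
      apply Finset.eq_of_subset_of_card_le _ (by omega)
      intro x hx
      obtain ⟨l, rfl⟩ := hall x hx
      have : c (e l) ∈ σ.image c := Finset.mem_image_of_mem _ hx
      rw [hσi, hce] at this
      exact Finset.mem_image_of_mem _ this
    obtain ⟨x, hx, hxe⟩ := this
    rw [he.card_extensions_eq_two hr hσc hσd hx hxe]
    exact even_two
  rw [hcount] at hodd
  exact (Nat.not_even_iff_odd.2 hodd) (Finset.even_sum _ hroom)

end Scarf

section KKM

open Filter Topology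

variable {I : Type*} [Fintype I]

/-- Discrete form of the Knaster–Kuratowski–Mazurkiewicz lemma on the grid of integer points of
the dilated simplex. -/
lemma exists_grid_point (hn : 2 ≤ Fintype.card I) (k : ℕ) (label : (I → ℕ) → I) :
    ∃ q : I → ℕ, ∑ i, q i = k ∧ ∀ i, q i ≤ Fintype.card I ∨
      ∃ p : I → ℕ, ∑ i, p i = k ∧ label p = i ∧
        ∀ j, p j ≤ q j + Fintype.card I ∧ q j ≤ p j + Fintype.card I := by
  classical
  let X := ↥((Finset.univ : Finset I).piAntidiag k) ⊕ I
  let s : I → X → ℕ := fun i =>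
    Sum.elim (fun x => x.1 i + 1) (fun j => if j = i then 0 else k + 2)
  let M := Fintype.card X
  let φ : X ≃ Fin M := Fintype.equivFin X
  let r : I → X → ℕ := fun i x => s i x * M + φ x
  have hM : 0 < M := by
    have h : 0 < Fintype.card I := by omega
    obtain ⟨i⟩ := Fintype.card_pos_iff.1 h
    exact Fintype.card_pos_iff.2 ⟨Sum.inr i⟩
  have hr_lt : ∀ i x y, s i x < s i y → r i x < r i y := by
    intro i x y h
    have h1 : (s i x + 1) * M ≤ s i y * M := Nat.mul_le_mul_right _ h
    have h2 := (φ x).2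
    simp only [r]
    nlinarith
  have hr_le : ∀ i x y, r i x ≤ r i y → s i x ≤ s i y := by
    intro i x y h
    by_contra hlt
    exact absurd (hr_lt i y x (not_le.1 hlt)) (not_lt.2 h)
  have hr : ∀ i, Function.Injective (r i) := by
    intro i x y h
    have h1 : s i x = s i y := le_antisymm (hr_le i x y h.le) (hr_le i y x h.ge)
    have h2 : ((φ x : Fin M) : ℕ) = φ y := by
      simp only [r, h1] at h
      omega
    exact φ.injective (Fin.ext h2)
  have hle : ∀ (x : ↥((Finset.univ : Finset I).piAntidiag k)), ∑ i, x.1 i = k := fun x =>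
    (Finset.mem_piAntidiag.1 x.2).1
  have hmk : ∀ y : I → ℕ, ∑ i, y i = k → y ∈ (Finset.univ : Finset I).piAntidiag k := fun y hy =>
    Finset.mem_piAntidiag.2 ⟨hy, fun i _ => Finset.mem_univ i⟩
  have he : IsExtreme r (Sum.inr : I → X) := by
    constructor
    · intro i y hy
      apply hr_lt
      rcases y with x | j
      · simp [s]
      · have : j ≠ i := fun h => hy (by rw [h])
        simp [s, this]
    · intro i j y hij hy
      apply hr_lt
      rcases y with x | l
      · have h1 : x.1 i ≤ ∑ i, x.1 i := Finset.single_le_sum (fun _ _ => Nat.zero_le _)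
          (Finset.mem_univ i)
        rw [hle x] at h1
        simp only [s, Sum.elim_inl, Sum.elim_inr, if_neg hij.symm]
        omega
      · exact absurd ⟨l, rfl⟩ hy
  obtain ⟨i0⟩ : Nonempty I := Fintype.card_pos_iff.1 (by omega)
  have hp0 : (Sum.inl ⟨Pi.single i0 k, hmk _ (by simp)⟩ : X) ∉ Set.range (Sum.inr : I → X) := by
    rintro ⟨i, hi⟩
    cases hi
  obtain ⟨τ, hτc, hτd, hτi⟩ := exists_dominant_rainbow hr he hp0
    (Sum.elim (fun x => label x.1) id) (fun i => rfl) hn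
  have hτne : τ.Nonempty := Finset.card_pos.1 (by omega)
  choose z hzτ hz using fun i => τ.exists_min_image (s i) hτne
  have hmsum : k < ∑ i, s i (z i) := by
    by_contra! hle'
    let y : I → ℕ := fun i => s i (z i) + if i = i0 then k - ∑ i, s i (z i) else 0
    have hy : ∑ i, y i = k := by
      simp only [y, Finset.sum_add_distrib, Finset.sum_ite_eq', Finset.mem_univ, if_true]
      omega
    obtain ⟨i, hi⟩ := hτd (Sum.inl ⟨y, hmk y hy⟩)
    have h1 := hr_le _ _ _ (hi _ (hzτ i))
    simp only [s, Sum.elim_inl, y] at h1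
    change s i (z i) + _ + 1 ≤ s i (z i) at h1
    omega
  have hcol : ∀ i, ∃ x ∈ τ, Sum.elim (fun x => label x.1) id x = i := by
    intro i
    have : i ∈ τ.image (Sum.elim (fun x => label x.1) id) := by rw [hτi]; exact Finset.mem_univ i
    simpa only [Finset.mem_image] using this
  have hreal : ∃ q, (Sum.inl q : X) ∈ τ := by
    by_contra! hno
    have : ∀ i, s i (z i) = 0 := by
      intro i
      obtain ⟨x, hx, hxi⟩ := hcol i
      rcases x with x | j
      · exact absurd hx (hno x)
      · have h1 := hz i _ hx
        have : j = i := hxi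
        simpa [s, this] using h1
    simp [this] at hmsum
  have hbound : ∀ p, (Sum.inl p : X) ∈ τ → ∀ j,
      s j (z j) ≤ p.1 j + 1 ∧ p.1 j + 2 ≤ s j (z j) + Fintype.card I := by
    intro p hp
    have h1 : ∀ j, s j (z j) ≤ p.1 j + 1 := fun j => hz j _ hp
    intro j
    refine ⟨h1 j, ?_⟩
    have h2 : ∑ i, (p.1 i + 1) = k + Fintype.card I := by
      rw [Finset.sum_add_distrib, hle p]; simp
    have h3 := Finset.add_sum_erase Finset.univ (fun i => p.1 i + 1) (Finset.mem_univ j)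
    have h4 := Finset.add_sum_erase Finset.univ (fun i => s i (z i)) (Finset.mem_univ j)
    have h5 : ∑ i ∈ Finset.univ.erase j, s i (z i) ≤ ∑ i ∈ Finset.univ.erase j, (p.1 i + 1) :=
      Finset.sum_le_sum fun i _ => h1 i
    omega
  obtain ⟨q, hq⟩ := hreal
  refine ⟨q.1, hle q, fun i => ?_⟩
  obtain ⟨x, hx, hxi⟩ := hcol i
  rcases x with p | j
  · right
    refine ⟨p.1, hle p, hxi, fun j => ?_⟩
    have h1 := hbound p hx j
    have h2 := hbound q hq j
    omega
  · left
    have h1 := hz i _ hx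
    have hji : j = i := hxi
    have h3 : s i (Sum.inr j) = 0 := by simp [s, hji]
    have h2 := hbound q hq i
    omega

/-- A Knaster–Kuratowski–Mazurkiewicz lemma: closed sets `F i` covering the simplex, such that
`F i` contains the face `x i = 0`, have a common point. -/
theorem exists_mem_of_closed_cover [Nonempty I] (F : I → Set (stdSimplex ℝ I))
    (hF : ∀ i, IsClosed (F i)) (hcov : ∀ x, ∃ i, x ∈ F i)
    (hface : ∀ (x : stdSimplex ℝ I) i, x.1 i = 0 → x ∈ F i) : ∃ x, ∀ i, x ∈ F i := by
  classical
  by_cases hn : 2 ≤ Fintype.card I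
  swap
  · have hcard : Fintype.card I = 1 := by
      have := Fintype.card_pos (α := I)
      omega
    obtain ⟨i0, hi0⟩ := Fintype.card_eq_one_iff.1 hcard
    obtain ⟨i, hi⟩ := hcov ⟨Pi.single i0 1, single_mem_stdSimplex ℝ i0⟩
    exact ⟨⟨Pi.single i0 1, single_mem_stdSimplex ℝ i0⟩, fun j =>
      by rwa [(hi0 j).trans (hi0 i).symm]⟩
  choose L hL using hcov
  set n := Fintype.card I with hndef
  have hmem : ∀ (k : ℕ) (p : I → ℕ), ∑ i, p i = k + 1 →
      (fun i => (p i : ℝ) / ((k : ℝ) + 1)) ∈ stdSimplex ℝ I := by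
    intro k p hp
    refine ⟨fun i => by positivity, ?_⟩
    rw [← Finset.sum_div, ← Nat.cast_sum, hp]
    push_cast
    exact div_self (by positivity)
  have hstep : ∀ k : ℕ, ∃ Q : stdSimplex ℝ I, ∀ i, Q.1 i ≤ (n : ℝ) / ((k : ℝ) + 1) ∨
      ∃ P ∈ F i, ∀ j, |P.1 j - Q.1 j| ≤ (n : ℝ) / ((k : ℝ) + 1) := by
    intro k
    obtain ⟨q, hq, hqi⟩ := exists_grid_point hn (k + 1) (fun p =>
      if hp : ∑ i, p i = k + 1 then L ⟨_, hmem k p hp⟩ else Classical.arbitrary I)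
    have hk : (0:ℝ) < (k : ℝ) + 1 := by positivity
    refine ⟨⟨_, hmem k q hq⟩, fun i => ?_⟩
    rcases hqi i with h | ⟨p, hp, hpi, hpq⟩
    · left
      exact div_le_div_of_nonneg_right (by exact_mod_cast h) hk.le
    · right
      rw [dif_pos hp] at hpi
      refine ⟨_, hpi ▸ hL _, fun j => ?_⟩
      have h1 : (p j : ℝ) ≤ q j + n := by exact_mod_cast (hpq j).1
      have h2 : (q j : ℝ) ≤ p j + n := by exact_mod_cast (hpq j).2
      change |(p j : ℝ) / ((k : ℝ) + 1) - (q j : ℝ) / ((k : ℝ) + 1)| ≤ _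
      rw [← sub_div, abs_div, abs_of_pos hk]
      apply div_le_div_of_nonneg_right _ hk.le
      rw [abs_le]
      constructor <;> linarith
  choose Q hQ using hstep
  have : CompactSpace (stdSimplex ℝ I) := isCompact_iff_compactSpace.1 (isCompact_stdSimplex ℝ I)
  obtain ⟨x, φ, hφ, hlim⟩ := CompactSpace.tendsto_subseq Q
  refine ⟨x, fun i => ?_⟩
  by_cases hxi : x.1 i = 0
  · exact hface x i hxi
  have hxpos : 0 < x.1 i := lt_of_le_of_ne (x.2.1 i) (Ne.symm hxi)
  have hsmall : Tendsto (fun k => (n : ℝ) / ((φ k : ℝ) + 1)) atTop (𝓝 0) := by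
    have h1 : Tendsto (fun k : ℕ => (n : ℝ) / ((k : ℝ) + 1)) atTop (𝓝 0) := by
      have := (tendsto_one_div_add_atTop_nhds_zero_nat (𝕜 := ℝ)).const_mul (n : ℝ)
      simpa [div_eq_mul_inv] using this
    exact h1.comp hφ.tendsto_atTop
  have hlimj : ∀ j, Tendsto (fun k => (Q (φ k)).1 j) atTop (𝓝 (x.1 j)) := by
    intro j
    have h1 : Continuous fun y : stdSimplex ℝ I => y.1 j :=
      (continuous_apply j).comp continuous_subtype_val
    exact (h1.tendsto x).comp hlim
  have hchoice : ∀ k, ∃ P : stdSimplex ℝ I, (∀ j, |P.1 j - (Q k).1 j| ≤ (n : ℝ) / ((k : ℝ) + 1)) ∧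
      ((n : ℝ) / ((k : ℝ) + 1) < (Q k).1 i → P ∈ F i) := by
    intro k
    rcases hQ k i with h | ⟨P, hP, hPQ⟩
    · refine ⟨Q k, fun j => ?_, fun h' => absurd h (not_le.2 h')⟩
      rw [sub_self, abs_zero]; positivity
    · exact ⟨P, hPQ, fun _ => hP⟩
  choose P hPQ hPF using hchoice
  have hPlim : Tendsto (fun k => P (φ k)) atTop (𝓝 x) := by
    rw [tendsto_subtype_rng, tendsto_pi_nhds]
    intro j
    have h1 : Tendsto (fun k => (P (φ k)).1 j - (Q (φ k)).1 j) atTop (𝓝 0) :=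
      squeeze_zero_norm (fun k => hPQ (φ k) j) hsmall
    simpa using h1.add (hlimj j)
  refine (hF i).mem_of_tendsto hPlim ?_
  filter_upwards [hsmall.eventually_lt (hlimj i) hxpos] with k hk
  exact hPF _ hk

end KKM

section Bounded

open Set Filter Topology

/-- Lebesgue measure on the unit interval. -/
abbrev unitMeasure : Measure ℝ := volume.restrict (Ioc 0 1)

/-- Essentially bounded functions on the unit interval. -/
structure Bdd (g : ℝ → ℝ) : Prop where
  meas : AEStronglyMeasurable g unitMeasure
  bound : ∃ M : ℝ, ∀ᵐ x ∂unitMeasure, |g x| ≤ M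

namespace Bdd

variable {g k : ℝ → ℝ}

lemma of_Ioo (hm : Measurable g)
    (hb : ∃ M : ℝ, ∀ᵐ x ∂(volume.restrict (Ioo (0:ℝ) 1)), |g x| ≤ M) : Bdd g := by
  refine ⟨hm.aestronglyMeasurable, ?_⟩
  rwa [unitMeasure, ← restrict_Ioo_eq_restrict_Ioc]

lemma exists_pos (hg : Bdd g) : ∃ M : ℝ, 0 < M ∧ ∀ᵐ x ∂unitMeasure, |g x| ≤ M := by
  obtain ⟨M, hM⟩ := hg.bound
  refine ⟨|M| + 1, by positivity, ?_⟩
  filter_upwards [hM] with x hx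
  linarith [le_abs_self M]

lemma add (hg : Bdd g) (hk : Bdd k) : Bdd (fun x => g x + k x) := by
  obtain ⟨M, hM⟩ := hg.bound
  obtain ⟨L, hL⟩ := hk.bound
  refine ⟨hg.meas.add hk.meas, M + L, ?_⟩
  filter_upwards [hM, hL] with x h1 h2
  exact (abs_add_le _ _).trans (add_le_add h1 h2)

lemma neg (hg : Bdd g) : Bdd (fun x => -g x) := by
  obtain ⟨M, hM⟩ := hg.bound
  refine ⟨hg.meas.neg, M, ?_⟩
  filter_upwards [hM] with x h1
  rwa [abs_neg]

lemma sub (hg : Bdd g) (hk : Bdd k) : Bdd (fun x => g x - k x) := by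
  simpa only [sub_eq_add_neg] using hg.add hk.neg

lemma mul (hg : Bdd g) (hk : Bdd k) : Bdd (fun x => g x * k x) := by
  obtain ⟨M, hM⟩ := hg.bound
  obtain ⟨L, hL⟩ := hk.bound
  refine ⟨hg.meas.mul hk.meas, M * L, ?_⟩
  filter_upwards [hM, hL] with x h1 h2
  rw [abs_mul]
  exact mul_le_mul h1 h2 (abs_nonneg _) ((abs_nonneg _).trans h1)

lemma const (c : ℝ) : Bdd (fun _ => c) :=
  ⟨aestronglyMeasurable_const, |c|, Eventually.of_forall fun _ => le_rfl⟩

lemma sq (hg : Bdd g) : Bdd (fun x => g x ^ 2) := by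
  simpa only [pow_two] using hg.mul hg

lemma abs (hg : Bdd g) : Bdd (fun x => |g x|) := by
  obtain ⟨M, hM⟩ := hg.bound
  refine ⟨hg.meas.norm, M, ?_⟩
  filter_upwards [hM] with x h1
  rwa [abs_abs]

lemma sum {ι : Type*} (s : Finset ι) {g : ι → ℝ → ℝ} (hg : ∀ i ∈ s, Bdd (g i)) :
    Bdd (fun x => ∑ i ∈ s, g i x) := by
  classical
  induction s using Finset.induction_on with
  | empty => simpa using Bdd.const 0
  | insert i s hi ih =>
    simp only [Finset.sum_insert hi]
    exact (hg i (Finset.mem_insert_self _ _)).add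
      (ih fun j hj => hg j (Finset.mem_insert_of_mem hj))

lemma of_continuousOn (hg : ContinuousOn g (Icc 0 1)) : Bdd g := by
  obtain ⟨M, hM⟩ := isCompact_Icc.exists_bound_of_continuousOn hg
  refine ⟨(hg.mono Ioc_subset_Icc_self).aestronglyMeasurable measurableSet_Ioc, M, ?_⟩
  filter_upwards [ae_restrict_mem measurableSet_Ioc] with x hx
  exact hM x (Ioc_subset_Icc_self hx)

lemma intervalIntegrable (hg : Bdd g) {p q : ℝ} (hp : 0 ≤ p) (hpq : p ≤ q) (hq : q ≤ 1) :
    IntervalIntegrable g volume p q := by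
  obtain ⟨M, hM⟩ := hg.bound
  rw [intervalIntegrable_iff_integrableOn_Ioc_of_le hpq]
  have : IntegrableOn g (Ioc 0 1) :=
    Integrable.of_bound (C := M) hg.meas hM
  exact this.mono_set (Ioc_subset_Ioc hp hq)

lemma integrable (hg : Bdd g) : IntervalIntegrable g volume 0 1 :=
  hg.intervalIntegrable le_rfl zero_le_one le_rfl

end Bdd

/-- Monotonicity of the integral over the unit interval for essentially bounded functions. -/
lemma integral_unit_mono {g k : ℝ → ℝ} (hg : Bdd g) (hk : Bdd k)
    (h : ∀ᵐ x ∂unitMeasure, g x ≤ k x) :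
    ∫ t in (0:ℝ)..1, g t ≤ ∫ t in (0:ℝ)..1, k t := by
  rw [intervalIntegral.integral_of_le zero_le_one, intervalIntegral.integral_of_le zero_le_one]
  exact integral_mono_ae (hg.integrable.1) (hk.integrable.1) h

/-- The Cauchy–Schwarz inequality against a constant. -/
lemma sq_integral_le {g : ℝ → ℝ} {p q : ℝ} (hpq : p ≤ q) (hg : IntervalIntegrable g volume p q)
    (hg2 : IntervalIntegrable (fun t => g t ^ 2) volume p q) :
    (∫ t in p..q, g t) ^ 2 ≤ (q - p) * ∫ t in p..q, g t ^ 2 := by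
  rcases hpq.eq_or_lt with rfl | hlt
  · simp
  have hL : 0 < q - p := sub_pos.2 hlt
  set lam := (∫ t in p..q, g t) / (q - p) with hlam
  have h1 : 0 ≤ ∫ t in p..q, (g t - lam) ^ 2 :=
    intervalIntegral.integral_nonneg hpq fun t _ => sq_nonneg _
  have h2 : ∫ t in p..q, (g t - lam) ^ 2
      = (∫ t in p..q, g t ^ 2) - 2 * lam * (∫ t in p..q, g t) + lam ^ 2 * (q - p) := by
    have : (fun t => (g t - lam) ^ 2) = fun t => (g t ^ 2 - 2 * lam * g t) + lam ^ 2 := by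
      funext t; ring
    rw [this, intervalIntegral.integral_add (hg2.sub (hg.const_mul _)) (by simp),
      intervalIntegral.integral_sub hg2 (hg.const_mul _), intervalIntegral.integral_const_mul,
      intervalIntegral.integral_const]
    simp only [smul_eq_mul]; ring
  rw [h2] at h1
  have h3 : ∫ t in p..q, g t = lam * (q - p) := by rw [hlam]; field_simp
  rw [h3] at h1 ⊢
  nlinarith

end Bounded

section Primitive

open Set Filter Topology

/-- `F` is an absolutely continuous function on `[p, q]` with derivative `f`. -/
structure Prim (p q : ℝ) (F f : ℝ → ℝ) : Prop where
  int : IntervalIntegrable f volume p q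
  eq : ∀ x ∈ Icc p q, F x = F p + ∫ t in p..x, f t

namespace Prim

variable {p q : ℝ} {F f G g : ℝ → ℝ}

lemma mono (h : Prim p q F f) {p' q' : ℝ} (h1 : p ≤ p') (h2 : p' ≤ q') (h3 : q' ≤ q) :
    Prim p' q' F f := by
  have hint : ∀ {x y}, p ≤ x → x ≤ y → y ≤ q → IntervalIntegrable f volume x y := by
    intro x y hx hxy hy
    refine h.int.mono_set ?_
    rw [uIcc_of_le hxy, uIcc_of_le (by linarith)]
    exact Icc_subset_Icc hx hy
  refine ⟨hint h1 h2 h3, fun x hx => ?_⟩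
  rw [h.eq x ⟨h1.trans hx.1, hx.2.trans h3⟩, h.eq p' ⟨h1, h2.trans h3⟩, add_assoc,
    intervalIntegral.integral_add_adjacent_intervals (hint le_rfl h1 (h2.trans h3))
      (hint h1 hx.1 (hx.2.trans h3))]

lemma continuousOn (h : Prim p q F f) (hpq : p ≤ q) : ContinuousOn F (Icc p q) := by
  have h1 := intervalIntegral.continuousOn_primitive_interval
    (μ := volume) (a := p) (b := q) (f := f) (by
      rw [uIcc_of_le hpq, integrableOn_Icc_iff_integrableOn_Ioc]
      exact h.int.1)
  rw [uIcc_of_le hpq] at h1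
  exact (continuousOn_const.add h1).congr h.eq

/-- Integration by parts. -/
lemma integral_mul_add (hF : Prim p q F f) (hG : Prim p q G g) (hpq : p ≤ q) :
    ∫ t in p..q, (f t * G t + F t * g t) = F q * G q - F p * G p := by
  have hFac : AbsolutelyContinuousOnInterval (fun x => F p + ∫ t in p..x, f t) p q :=
    ((LipschitzWith.const (F p)).lipschitzOnWith.absolutelyContinuousOnInterval).add
      (hF.int.absolutelyContinuousOnInterval_intervalIntegral left_mem_uIcc)
  have hGac : AbsolutelyContinuousOnInterval (fun x => G p + ∫ t in p..x, g t) p q :=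
    ((LipschitzWith.const (G p)).lipschitzOnWith.absolutelyContinuousOnInterval).add
      (hG.int.absolutelyContinuousOnInterval_intervalIntegral left_mem_uIcc)
  have key := hFac.integral_deriv_mul_eq_sub hGac
  simp only [← hF.eq q (right_mem_Icc.2 hpq), ← hG.eq q (right_mem_Icc.2 hpq),
    intervalIntegral.integral_same, add_zero] at key
  rw [← key]
  apply intervalIntegral.integral_congr_ae
  filter_upwards [hF.int.ae_hasDerivAt_integral, hG.int.ae_hasDerivAt_integral] with x h1 h2 hx
  have hx' := uIoc_subset_uIcc hx
  rw [((h1 hx' p left_mem_uIcc).const_add (F p)).deriv,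
    ((h2 hx' p left_mem_uIcc).const_add (G p)).deriv]
  rw [uIcc_of_le hpq] at hx'
  rw [← hF.eq x hx', ← hG.eq x hx']

lemma mul (hF : Prim p q F f) (hG : Prim p q G g) (hpq : p ≤ q) :
    Prim p q (fun t => F t * G t) (fun t => f t * G t + F t * g t) := by
  constructor
  · have h1 := hF.continuousOn hpq
    have h2 := hG.continuousOn hpq
    rw [← uIcc_of_le hpq] at h1 h2
    exact (hF.int.mul_continuousOn h2).add (hG.int.continuousOn_mul h1)
  · intro x hx
    rw [(hF.mono le_rfl hx.1 hx.2).integral_mul_add (hG.mono le_rfl hx.1 hx.2) hx.1]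
    ring

end Prim

lemma H1.prim (v : H1) : Prim 0 1 v.val v.dval := ⟨v.dval_int, v.ftc⟩

lemma Coeffs.prim_a (P : Coeffs) : Prim 0 1 P.a P.a' := ⟨P.a'_int, P.ftc_a⟩

lemma Coeffs.prim_b (P : Coeffs) : Prim 0 1 P.b P.b' := ⟨P.b'_int, P.ftc_b⟩

lemma H1.bdd (v : H1) : Bdd v.val := .of_continuousOn (v.prim.continuousOn zero_le_one)

lemma Coeffs.bdd_a (P : Coeffs) : Bdd P.a := .of_continuousOn (P.prim_a.continuousOn zero_le_one)

lemma Coeffs.bdd_b (P : Coeffs) : Bdd P.b := .of_continuousOn (P.prim_b.continuousOn zero_le_one)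

lemma Coeffs.bdd_c (P : Coeffs) : Bdd P.c := .of_Ioo P.c_meas P.c_bdd

lemma Coeffs.bdd_a' (P : Coeffs) : Bdd P.a' := .of_Ioo P.a'_meas P.a'_bdd

lemma Coeffs.bdd_b' (P : Coeffs) : Bdd P.b' := .of_Ioo P.b'_meas P.b'_bdd

lemma H1.IsH2.continuousOn {u : H1} (hu : u.IsH2) : ContinuousOn u.dval (Icc 0 1) := by
  obtain ⟨u'', -, hint, -, h⟩ := hu
  exact Prim.continuousOn ⟨hint, h⟩ zero_le_one

/-- Integrand of the bilinear form. -/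
lemma Coeffs.bdd_integrand (P : Coeffs) {u v : H1} (hu : Bdd u.dval) (hv : Bdd v.dval) :
    Bdd (fun t => P.a t * u.dval t * v.dval t + P.b t * u.dval t * v.val t
      + P.c t * u.val t * v.val t) :=
  (((P.bdd_a.mul hu).mul hv).add ((P.bdd_b.mul hu).mul v.bdd)).add ((P.bdd_c.mul u.bdd).mul v.bdd)

/-- Coercivity of the bilinear form. -/
lemma Coeffs.coercive (P : Coeffs) {v : H1} (hv : Bdd v.dval) (h0 : v.val 0 = 0)
    (h1 : v.val 1 = 0) : P.a0 * ∫ t in (0:ℝ)..1, v.dval t ^ 2 ≤ P.B v v := by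
  have hibp := P.prim_b.integral_mul_add (v.prim.mul v.prim zero_le_one) zero_le_one
  rw [h0, h1] at hibp
  have hb1 : Bdd (fun t => P.b' t * (v.val t * v.val t)
      + P.b t * (v.dval t * v.val t + v.val t * v.dval t)) :=
    (P.bdd_b'.mul (v.bdd.mul v.bdd)).add (P.bdd_b.mul ((hv.mul v.bdd).add (v.bdd.mul hv)))
  have hB : P.B v v = ∫ t in (0:ℝ)..1, ((P.a t * v.dval t * v.dval t + P.b t * v.dval t * v.val t
      + P.c t * v.val t * v.val t) - (1 / 2) * (P.b' t * (v.val t * v.val t)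
      + P.b t * (v.dval t * v.val t + v.val t * v.dval t))) := by
    rw [intervalIntegral.integral_sub (P.bdd_integrand hv hv).integrable
      (hb1.integrable.const_mul _), intervalIntegral.integral_const_mul, hibp]
    simp [Coeffs.B]
  rw [hB, ← intervalIntegral.integral_const_mul]
  refine integral_unit_mono ((Bdd.const _).mul hv.sq)
    ((P.bdd_integrand hv hv).sub ((Bdd.const _).mul hb1)) ?_
  have hcb := P.cb_nonneg
  rw [restrict_Ioo_eq_restrict_Ioc] at hcb
  filter_upwards [hcb, ae_restrict_mem measurableSet_Ioc] with x hx hx01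
  have ha := P.a_lb x (Ioc_subset_Icc_self hx01)
  nlinarith [mul_nonneg (sub_nonneg.2 ha) (sq_nonneg (v.dval x)),
    mul_nonneg hx (sq_nonneg (v.val x))]

/-- Functions in `H¹₀` are bounded by the norm of their derivative. -/
lemma H1.sq_val_le (v : H1) (h0 : v.val 0 = 0) {x : ℝ} (hx : x ∈ Icc (0:ℝ) 1) :
    v.val x ^ 2 ≤ ∫ t in (0:ℝ)..1, v.dval t ^ 2 := by
  have hs : uIcc 0 x ⊆ uIcc (0:ℝ) 1 := by
    rw [uIcc_of_le hx.1, uIcc_of_le zero_le_one]; exact Icc_subset_Icc le_rfl hx.2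
  have h1 := sq_integral_le hx.1 (v.dval_int.mono_set hs) (v.dval_sq_int.mono_set hs)
  rw [v.ftc x hx, h0, zero_add]
  have h2 : ∫ t in (0:ℝ)..x, v.dval t ^ 2 ≤ ∫ t in (0:ℝ)..1, v.dval t ^ 2 :=
    intervalIntegral.integral_mono_interval le_rfl hx.1 hx.2
      (Eventually.of_forall fun t => sq_nonneg _) v.dval_sq_int
  have h3 : 0 ≤ ∫ t in (0:ℝ)..x, v.dval t ^ 2 :=
    intervalIntegral.integral_nonneg hx.1 fun t _ => sq_nonneg _
  nlinarith [hx.2]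

end Primitive

section PiecewiseLinear

open Set Filter Topology

/-- The characteristic function of `(p, q]`. -/
def chi (p q t : ℝ) : ℝ := (Ioc p q).indicator 1 t

/-- The continuous primitive of `chi p q`. -/
def ell (p q t : ℝ) : ℝ := min t q - min t p

lemma chi_of_mem {p q t : ℝ} (h : t ∈ Ioc p q) : chi p q t = 1 := by simp [chi, h]

lemma chi_of_notMem {p q t : ℝ} (h : t ∉ Ioc p q) : chi p q t = 0 := by simp [chi, h]

lemma measurable_chi (p q : ℝ) : Measurable (chi p q) :=
  measurable_one.indicator measurableSet_Ioc

lemma continuous_ell (p q : ℝ) : Continuous (ell p q) := by unfold ell; fun_prop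

lemma abs_chi_le (p q t : ℝ) : |chi p q t| ≤ 1 := by
  by_cases h : t ∈ Ioc p q
  · simp [chi_of_mem h]
  · simp [chi_of_notMem h]

lemma abs_ell_le {p q : ℝ} (hpq : p ≤ q) (h : q - p ≤ 1) (t : ℝ) : |ell p q t| ≤ 1 := by
  unfold ell
  rw [abs_le]
  rcases le_total t q with h1 | h1 <;> rcases le_total t p with h2 | h2 <;>
    simp only [h1, h2, min_eq_left, min_eq_right] <;> constructor <;> linarith

lemma bdd_chi (p q : ℝ) : Bdd (chi p q) :=
  ⟨(measurable_chi p q).aestronglyMeasurable, 1, Eventually.of_forall (abs_chi_le p q)⟩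

lemma bdd_ell (p q : ℝ) : Bdd (ell p q) := .of_continuousOn (continuous_ell p q).continuousOn

lemma integral_chi {p q x : ℝ} (hp : 0 ≤ p) (hpq : p ≤ q) (hx : 0 ≤ x) :
    ∫ t in (0:ℝ)..x, chi p q t = ell p q x := by
  rw [intervalIntegral.integral_of_le hx]
  unfold chi
  rw [setIntegral_indicator measurableSet_Ioc, Ioc_inter_Ioc]
  simp only [Pi.one_apply, setIntegral_const, smul_eq_mul, mul_one]
  rw [max_eq_right hp, measureReal_def, Real.volume_Ioc]
  unfold ell
  rcases le_total x p with h | h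
  · rw [min_eq_left h, min_eq_left (h.trans hpq), ENNReal.ofReal_of_nonpos (by linarith)]; simp
  · rw [min_eq_right h, ENNReal.toReal_ofReal (by linarith [le_min h hpq])]

namespace Mesh

variable {N : ℕ} (m : Mesh N)

lemma x_le {i j : ℕ} (hij : i ≤ j) (hj : j ≤ N) : m.x i ≤ m.x j := by
  induction j, hij using Nat.le_induction with
  | base => exact le_rfl
  | succ k _ ih => exact (ih (by omega)).trans (m.x_mono k (by omega)).le

lemma x_nonneg {i : ℕ} (hi : i ≤ N) : 0 ≤ m.x i := m.x_zero ▸ m.x_le (Nat.zero_le i) hi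

lemma x_le_one {i : ℕ} (hi : i ≤ N) : m.x i ≤ 1 := by
  have := m.x_le hi le_rfl
  rwa [m.x_last] at this

lemma h_pos {i : ℕ} (hi : i < N) : 0 < m.h i := sub_pos.2 (m.x_mono i hi)

lemma sum_h : ∑ i : Fin N, m.h i = 1 := by
  rw [← Finset.sum_range (fun i => m.h i)]
  unfold Mesh.h
  rw [Finset.sum_range_sub, m.x_zero, m.x_last, sub_zero]

lemma h_le_one {i : ℕ} (hi : i < N) : m.h i ≤ 1 := by
  have h1 := m.x_nonneg hi.le
  have h2 := m.x_le_one (Nat.succ_le_of_lt hi)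
  unfold Mesh.h
  simp only [Nat.succ_eq_add_one] at h2
  linarith

lemma exists_mem_Ioc {t : ℝ} (ht : t ∈ Ioc (0:ℝ) 1) :
    ∃ i : Fin N, t ∈ Ioc (m.x i) (m.x (i + 1)) := by
  by_contra hcon
  push Not at hcon
  have : ∀ i, i ≤ N → m.x i < t := by
    intro i
    induction i with
    | zero => intro _; rw [m.x_zero]; exact ht.1
    | succ k ih =>
      intro hk
      have h1 := hcon ⟨k, hk⟩
      simp only [mem_Ioc, not_and, not_le] at h1
      exact h1 (ih (by omega))
  have h1 := this N le_rfl
  rw [m.x_last] at h1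
  exact absurd h1 (not_lt.2 ht.2)

lemma notMem_of_ne {i j : ℕ} (hi : i < N) (hj : j < N) (hij : i ≠ j) {t : ℝ}
    (ht : t ∈ Ioc (m.x i) (m.x (i + 1))) : t ∉ Ioc (m.x j) (m.x (j + 1)) := by
  intro h
  rcases lt_or_gt_of_ne hij with h1 | h1
  · have := m.x_le (Nat.succ_le_of_lt h1) hj.le
    exact absurd (h.1.trans_le (ht.2.trans this)) (lt_irrefl _)
  · have := m.x_le (Nat.succ_le_of_lt h1) hi.le
    exact absurd (ht.1.trans_le (h.2.trans this)) (lt_irrefl _)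

lemma ae_exists_mem_Ioo :
    ∀ᵐ t ∂unitMeasure, ∃ i : Fin N, t ∈ Ioo (m.x i) (m.x (i + 1)) := by
  have hc : (m.x '' Set.univ).Countable := (Set.countable_univ).image _
  filter_upwards [ae_restrict_mem measurableSet_Ioc, ae_restrict_of_ae (hc.ae_notMem volume)]
    with t ht h
  obtain ⟨i, hi⟩ := m.exists_mem_Ioc ht
  refine ⟨i, hi.1, lt_of_le_of_ne hi.2 ?_⟩
  rintro rfl
  exact h ⟨_, mem_univ _, rfl⟩

lemma integral_eq_sum {g : ℝ → ℝ} (hg : Bdd g) :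
    ∫ t in (0:ℝ)..1, g t = ∑ i : Fin N, ∫ t in (m.x i)..(m.x (i + 1)), g t := by
  rw [← Finset.sum_range (fun i => ∫ t in (m.x i)..(m.x (i + 1)), g t),
    intervalIntegral.sum_integral_adjacent_intervals, m.x_zero, m.x_last]
  intro k hk
  exact hg.intervalIntegrable (m.x_nonneg hk.le) (m.x_mono k hk).le (m.x_le_one hk)

/-- The piecewise linear function with slopes `s`, vanishing at `0`. -/
def pl (s : Fin N → ℝ) : H1 where
  val t := ∑ i, s i * ell (m.x i) (m.x (i + 1)) t
  dval t := ∑ i, s i * chi (m.x i) (m.x (i + 1)) t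
  dval_meas := Finset.measurable_sum _ fun i _ => (measurable_chi _ _).const_mul _
  dval_int := (Bdd.sum _ fun i _ => (Bdd.const (s i)).mul (bdd_chi _ _)).integrable
  dval_sq_int := (Bdd.sum _ fun i _ => (Bdd.const (s i)).mul (bdd_chi _ _)).sq.integrable
  ftc x hx := by
    have h0 : ∀ i : Fin N, ell (m.x i) (m.x (i + 1)) 0 = 0 := by
      intro i
      simp [ell, m.x_nonneg i.2.le, m.x_nonneg (Nat.succ_le_of_lt i.2)]
    rw [intervalIntegral.integral_finsetSum]
    · simp only [h0, mul_zero, Finset.sum_const_zero, zero_add,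
        intervalIntegral.integral_const_mul]
      refine Finset.sum_congr rfl fun i _ => ?_
      rw [integral_chi (m.x_nonneg i.2.le) (m.x_mono i i.2).le hx.1]
    · intro i _
      exact ((Bdd.const (s i)).mul (bdd_chi _ _)).intervalIntegrable le_rfl hx.1 hx.2

lemma pl_dval_of_mem (s : Fin N → ℝ) (i : Fin N) {t : ℝ}
    (ht : t ∈ Ioc (m.x i) (m.x (i + 1))) : (m.pl s).dval t = s i := by
  simp only [pl]
  rw [Finset.sum_eq_single i]
  · rw [chi_of_mem ht, mul_one]
  · intro j _ hj
    rw [chi_of_notMem (m.notMem_of_ne i.2 j.2 (fun h => hj (Fin.ext h.symm)) ht), mul_zero]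
  · simp

lemma pl_val_zero (s : Fin N → ℝ) : (m.pl s).val 0 = 0 := by
  simp only [pl]
  refine Finset.sum_eq_zero fun i _ => ?_
  simp [ell, m.x_nonneg i.2.le, m.x_nonneg (Nat.succ_le_of_lt i.2)]

lemma pl_val_one (s : Fin N → ℝ) : (m.pl s).val 1 = ∑ i : Fin N, m.h i * s i := by
  simp only [pl]
  refine Finset.sum_congr rfl fun i _ => ?_
  simp [ell, m.x_le_one i.2.le, m.x_le_one (Nat.succ_le_of_lt i.2), Mesh.h, mul_comm]

lemma pl_isPL (s : Fin N → ℝ) : m.IsPL (m.pl s) := fun i hi =>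
  ⟨s ⟨i, hi⟩, fun _ ht => m.pl_dval_of_mem s ⟨i, hi⟩ ⟨ht.1, ht.2.le⟩⟩

lemma bdd_pl (s : Fin N → ℝ) : Bdd (m.pl s).dval :=
  Bdd.sum Finset.univ fun i _ => (Bdd.const (s i)).mul (bdd_chi _ _)

/-- Two `H¹` functions vanishing at `0` with almost everywhere equal derivatives coincide. -/
lemma _root_.EquidMesh.H1.val_eq {v w : H1} (hv : v.val 0 = 0) (hw : w.val 0 = 0)
    (h : v.dval =ᵐ[unitMeasure] w.dval) {x : ℝ} (hx : x ∈ Icc (0:ℝ) 1) : v.val x = w.val x := by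
  rw [v.ftc x hx, w.ftc x hx, hv, hw]
  congr 1
  rw [intervalIntegral.integral_of_le hx.1, intervalIntegral.integral_of_le hx.1]
  exact integral_congr_ae (ae_restrict_of_ae_restrict_of_subset (Ioc_subset_Ioc le_rfl hx.2) h)

lemma IsPL.exists_ae_eq {v : H1} (hv : m.IsPL v) :
    ∃ s : Fin N → ℝ, v.dval =ᵐ[unitMeasure] (m.pl s).dval := by
  choose s hs using hv
  refine ⟨fun i => s i i.2, ?_⟩
  filter_upwards [m.ae_exists_mem_Ioo] with t ht
  obtain ⟨i, hi⟩ := ht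
  rw [hs i i.2 t hi, m.pl_dval_of_mem _ i ⟨hi.1, hi.2.le⟩]

end Mesh

/-- Entries of the stiffness matrix for the element `(p, q)` tested with the element `(p', q')`. -/
def Coeffs.stiff (P : Coeffs) (p q p' q' : ℝ) : ℝ :=
  ∫ t in (0:ℝ)..1, (P.a t * chi p q t * chi p' q' t + P.b t * chi p q t * ell p' q' t
    + P.c t * ell p q t * ell p' q' t)

/-- Entries of the load vector. -/
def load (f : ℝ → ℝ) (p q : ℝ) : ℝ := ∫ t in (0:ℝ)..1, f t * ell p q t

lemma Coeffs.B_pl (P : Coeffs) {N : ℕ} (m : Mesh N) (s t : Fin N → ℝ) :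
    P.B (m.pl s) (m.pl t) = ∑ i : Fin N, t i * ∑ j : Fin N,
      P.stiff (m.x j) (m.x (j + 1)) (m.x i) (m.x (i + 1)) * s j := by
  have hb : ∀ i j : Fin N, Bdd (fun r => P.a r * chi (m.x j) (m.x (j + 1)) r *
      chi (m.x i) (m.x (i + 1)) r + P.b r * chi (m.x j) (m.x (j + 1)) r *
      ell (m.x i) (m.x (i + 1)) r + P.c r * ell (m.x j) (m.x (j + 1)) r *
      ell (m.x i) (m.x (i + 1)) r) := fun i j =>
    (((P.bdd_a.mul (bdd_chi _ _)).mul (bdd_chi _ _)).add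
      ((P.bdd_b.mul (bdd_chi _ _)).mul (bdd_ell _ _))).add
      ((P.bdd_c.mul (bdd_ell _ _)).mul (bdd_ell _ _))
  have : P.B (m.pl s) (m.pl t) = ∫ r in (0:ℝ)..1, ∑ i : Fin N, ∑ j : Fin N, (t i * s j) *
      (P.a r * chi (m.x j) (m.x (j + 1)) r *
      chi (m.x i) (m.x (i + 1)) r + P.b r * chi (m.x j) (m.x (j + 1)) r *
      ell (m.x i) (m.x (i + 1)) r + P.c r * ell (m.x j) (m.x (j + 1)) r *
      ell (m.x i) (m.x (i + 1)) r) := by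
    unfold Coeffs.B
    congr 1
    funext r
    simp only [Mesh.pl, mul_assoc, Finset.sum_mul, Finset.mul_sum]
    simp only [← Finset.sum_add_distrib]
    refine Finset.sum_congr rfl fun i _ => Finset.sum_congr rfl fun j _ => ?_
    ring
  rw [this, intervalIntegral.integral_finsetSum]
  · refine Finset.sum_congr rfl fun i _ => ?_
    rw [intervalIntegral.integral_finsetSum, Finset.mul_sum]
    · refine Finset.sum_congr rfl fun j _ => ?_
      rw [intervalIntegral.integral_const_mul, Coeffs.stiff]
      ring
    · exact fun j _ => ((hb i j).integrable.const_mul _)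
  · exact fun i _ => (Bdd.sum _ fun j _ => (Bdd.const _).mul (hb i j)).integrable

lemma ip_pl {f : ℝ → ℝ} (hf : Bdd f) {N : ℕ} (m : Mesh N) (t : Fin N → ℝ) :
    ip f (m.pl t) = ∑ i : Fin N, t i * load f (m.x i) (m.x (i + 1)) := by
  unfold ip load
  simp only [Mesh.pl, Finset.mul_sum]
  rw [intervalIntegral.integral_finsetSum]
  · refine Finset.sum_congr rfl fun i _ => ?_
    rw [← intervalIntegral.integral_const_mul]
    congr 1
    funext r
    ring
  · exact fun i _ => (hf.mul ((Bdd.const _).mul (bdd_ell _ _))).integrable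

lemma Coeffs.B_congr_right (P : Coeffs) (u : H1) {v w : H1} (h : v.dval =ᵐ[unitMeasure] w.dval)
    (hv : ∀ x ∈ Icc (0:ℝ) 1, v.val x = w.val x) : P.B u v = P.B u w := by
  unfold Coeffs.B
  rw [intervalIntegral.integral_of_le zero_le_one, intervalIntegral.integral_of_le zero_le_one]
  refine integral_congr_ae ?_
  filter_upwards [h, ae_restrict_mem measurableSet_Ioc] with x hx hx1
  rw [hx, hv x (Ioc_subset_Icc_self hx1)]

lemma ip_congr (f : ℝ → ℝ) {v w : H1}
    (hv : ∀ x ∈ Icc (0:ℝ) 1, v.val x = w.val x) : ip f v = ip f w := by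
  unfold ip
  refine intervalIntegral.integral_congr fun x hx => ?_
  rw [uIcc_of_le zero_le_one] at hx
  simp only [hv x hx]

end PiecewiseLinear

section ConstrainedSystem

variable {N : ℕ}

/-- The matrix of the linear system `K s = F` constrained to the hyperplane orthogonal to `h`. -/
def constrainedMatrix (K : Fin N → Fin N → ℝ) (h : Fin N → ℝ) : Matrix (Fin N) (Fin N) ℝ :=
  Matrix.of fun i j => K i j - h i * ∑ k, K k j + h i * h j

/-- The solution of the linear system `K s = F` constrained to the hyperplane orthogonal to `h`. -/
def constrainedSolution (K : Fin N → Fin N → ℝ) (F h : Fin N → ℝ) : Fin N → ℝ :=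
  (constrainedMatrix K h).det⁻¹ •
    ((constrainedMatrix K h).adjugate.mulVec fun i => F i - h i * ∑ k, F k)

lemma constrainedMatrix_mulVec (K : Fin N → Fin N → ℝ) (h s : Fin N → ℝ) (i : Fin N) :
    (constrainedMatrix K h).mulVec s i =
      ∑ j, K i j * s j - h i * ∑ k, ∑ j, K k j * s j + h i * ∑ j, h j * s j := by
  simp only [constrainedMatrix, Matrix.mulVec, dotProduct, Matrix.of_apply]
  rw [Finset.sum_comm (f := fun k j => K k j * s j), Finset.mul_sum, Finset.mul_sum,
    ← Finset.sum_sub_distrib, ← Finset.sum_add_distrib]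
  refine Finset.sum_congr rfl fun j _ => ?_
  rw [← Finset.sum_mul]
  ring

lemma sum_constrainedMatrix_mulVec (K : Fin N → Fin N → ℝ) (h s : Fin N → ℝ)
    (hsum : ∑ i, h i = 1) :
    ∑ i, (constrainedMatrix K h).mulVec s i = ∑ j, h j * s j := by
  simp only [constrainedMatrix_mulVec, Finset.sum_add_distrib, Finset.sum_sub_distrib,
    ← Finset.sum_mul, hsum]
  ring

lemma sum_mul_constrainedMatrix_mulVec (K : Fin N → Fin N → ℝ) (h s t : Fin N → ℝ)
    (ht : ∑ i, h i * t i = 0) :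
    ∑ i, t i * (constrainedMatrix K h).mulVec s i = ∑ i, t i * ∑ j, K i j * s j := by
  have : ∀ i, t i * (constrainedMatrix K h).mulVec s i = t i * ∑ j, K i j * s j
      + (h i * t i) * (∑ j, h j * s j - ∑ k, ∑ j, K k j * s j) := by
    intro i
    rw [constrainedMatrix_mulVec]
    ring
  simp only [this, Finset.sum_add_distrib, ← Finset.sum_mul, ht, zero_mul, add_zero]

lemma constrainedMatrix_det_ne_zero {K : Fin N → Fin N → ℝ} {h : Fin N → ℝ}
    (hsum : ∑ i, h i = 1)
    (hK : ∀ s : Fin N → ℝ, ∑ i, h i * s i = 0 → ∑ i, s i * ∑ j, K i j * s j ≤ 0 → s = 0) :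
    (constrainedMatrix K h).det ≠ 0 := by
  intro hdet
  obtain ⟨s, hs, hs0⟩ := Matrix.exists_mulVec_eq_zero_iff.2 hdet
  have h1 := sum_constrainedMatrix_mulVec K h s hsum
  simp only [hs0, Pi.zero_apply, Finset.sum_const_zero] at h1
  have h2 := sum_mul_constrainedMatrix_mulVec K h s s h1.symm
  simp only [hs0, Pi.zero_apply, mul_zero, Finset.sum_const_zero] at h2
  exact hs (hK s h1.symm h2.symm.le)

lemma constrainedSolution_spec {K : Fin N → Fin N → ℝ} {h : Fin N → ℝ} (F : Fin N → ℝ)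
    (hsum : ∑ i, h i = 1)
    (hK : ∀ s : Fin N → ℝ, ∑ i, h i * s i = 0 → ∑ i, s i * ∑ j, K i j * s j ≤ 0 → s = 0) :
    ∑ i, h i * constrainedSolution K F h i = 0 ∧
      ∀ t : Fin N → ℝ, ∑ i, h i * t i = 0 →
        ∑ i, t i * ∑ j, K i j * constrainedSolution K F h j = ∑ i, t i * F i := by
  have hdet := constrainedMatrix_det_ne_zero hsum hK
  have hs : (constrainedMatrix K h).mulVec (constrainedSolution K F h)
      = fun i => F i - h i * ∑ k, F k := by
    rw [constrainedSolution, Matrix.mulVec_smul, Matrix.mulVec_mulVec, Matrix.mul_adjugate,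
      Matrix.smul_mulVec, Matrix.one_mulVec, smul_smul, inv_mul_cancel₀ hdet, one_smul]
  have h1 := sum_constrainedMatrix_mulVec K h (constrainedSolution K F h) hsum
  simp only [hs, Finset.sum_sub_distrib, ← Finset.sum_mul, hsum, one_mul, sub_self] at h1
  refine ⟨h1.symm, fun t ht => ?_⟩
  rw [← sum_mul_constrainedMatrix_mulVec K h _ t ht, hs]
  have : ∀ i, t i * (F i - h i * ∑ k, F k) = t i * F i - (h i * t i) * ∑ k, F k := by
    intro i; ring
  simp only [this, Finset.sum_sub_distrib, ← Finset.sum_mul, ht, zero_mul, sub_zero]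

lemma continuous_constrainedSolution {Y : Type*} [TopologicalSpace Y]
    {K : Y → Fin N → Fin N → ℝ} {F h : Y → Fin N → ℝ}
    (hKc : ∀ i j, Continuous fun y => K y i j) (hFc : ∀ i, Continuous fun y => F y i)
    (hhc : ∀ i, Continuous fun y => h y i) (hsum : ∀ y, ∑ i, h y i = 1)
    (hK : ∀ y (s : Fin N → ℝ), ∑ i, h y i * s i = 0 → ∑ i, s i * ∑ j, K y i j * s j ≤ 0 → s = 0) (i : Fin N) :
    Continuous fun y => constrainedSolution (K y) (F y) (h y) i := by
  have hA : Continuous fun y => constrainedMatrix (K y) (h y) := by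
    refine continuous_matrix fun i j => ?_
    simp only [constrainedMatrix, Matrix.of_apply]
    fun_prop
  have hd := hA.matrix_det.inv₀ fun y => constrainedMatrix_det_ne_zero (hsum y) (hK y)
  have hF : Continuous fun y => fun i => F y i - h y i * ∑ k, F y k := by fun_prop
  exact (continuous_apply i).comp (hd.smul (hA.matrix_adjugate.matrix_mulVec hF))

end ConstrainedSystem

section FiniteElement

open Set Filter Topology

namespace Mesh

variable {N : ℕ} (m : Mesh N)

/-- The slopes of the finite element solution. -/
def slopes (P : Coeffs) (f : ℝ → ℝ) : Fin N → ℝ :=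
  constrainedSolution (fun i j => P.stiff (m.x j) (m.x (j + 1)) (m.x i) (m.x (i + 1)))
    (fun i => load f (m.x i) (m.x (i + 1))) (fun i => m.h i)

lemma eq_zero_of_B_le (P : Coeffs) (s : Fin N → ℝ) (hs : ∑ i : Fin N, m.h i * s i = 0)
    (hB : ∑ i : Fin N, s i * ∑ j : Fin N,
      P.stiff (m.x j) (m.x (j + 1)) (m.x i) (m.x (i + 1)) * s j ≤ 0) : s = 0 := by
  rw [← P.B_pl m s s] at hB
  have h1 := P.coercive (m.bdd_pl s) (m.pl_val_zero s) ((m.pl_val_one s).trans hs)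
  have h2 : ∫ t in (0:ℝ)..1, (m.pl s).dval t ^ 2 = ∑ i : Fin N, m.h i * s i ^ 2 := by
    rw [m.integral_eq_sum (m.bdd_pl s).sq]
    refine Finset.sum_congr rfl fun i _ => ?_
    rw [intervalIntegral.integral_congr_ae (g := fun _ => s i ^ 2)]
    · simp [Mesh.h]
    · refine Eventually.of_forall fun t ht => ?_
      rw [uIoc_of_le (m.x_mono i i.2).le] at ht
      rw [m.pl_dval_of_mem s i ht]
  rw [h2] at h1
  have h3 : ∑ i : Fin N, m.h i * s i ^ 2 ≤ 0 := by
    by_contra hcon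
    push Not at hcon
    have := mul_pos P.a0_pos hcon
    linarith
  have h4 : ∀ i ∈ Finset.univ, 0 ≤ m.h (i : Fin N) * s i ^ 2 := fun i _ =>
    mul_nonneg (m.h_pos i.2).le (sq_nonneg _)
  funext i
  have h5 := (Finset.sum_eq_zero_iff_of_nonneg h4).1 (le_antisymm h3 (Finset.sum_nonneg h4)) i
    (Finset.mem_univ i)
  rcases mul_eq_zero.1 h5 with h | h
  · exact absurd h (m.h_pos i.2).ne'
  · exact pow_eq_zero_iff two_ne_zero |>.1 h

/-- The finite element solution. -/
def fe (P : Coeffs) (f : ℝ → ℝ) : H1 := m.pl (m.slopes P f)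

lemma fe_isFESolution (P : Coeffs) {f : ℝ → ℝ} (hf : Bdd f) :
    P.IsFESolution f m (m.fe P f) := by
  obtain ⟨h1, h2⟩ := constrainedSolution_spec
    (K := fun i j => P.stiff (m.x j) (m.x (j + 1)) (m.x i) (m.x (i + 1)))
    (fun i : Fin N => load f (m.x i) (m.x (i + 1))) m.sum_h (m.eq_zero_of_B_le P)
  refine ⟨m.pl_val_zero _, (m.pl_val_one _).trans h1, m.pl_isPL _, fun v hv0 hv1 hv => ?_⟩
  obtain ⟨t, ht⟩ := hv.exists_ae_eq
  have hval : ∀ x ∈ Icc (0:ℝ) 1, v.val x = (m.pl t).val x := fun x hx =>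
    H1.val_eq hv0 (m.pl_val_zero t) ht hx
  rw [P.B_congr_right _ ht hval, ip_congr f hval, fe, P.B_pl, ip_pl hf]
  refine h2 t ?_
  rw [← m.pl_val_one, ← hval 1 (right_mem_Icc.2 zero_le_one), hv1]

end Mesh

end FiniteElement

section Estimates

open Set Filter Topology

lemma integral_sub_const_sq {g : ℝ → ℝ} {p q : ℝ} (s : ℝ) (hg : IntervalIntegrable g volume p q)
    (hg2 : IntervalIntegrable (fun t => g t ^ 2) volume p q) :
    ∫ t in p..q, (g t - s) ^ 2
      = (∫ t in p..q, g t ^ 2) - 2 * s * (∫ t in p..q, g t) + s ^ 2 * (q - p) := by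
  have : (fun t => (g t - s) ^ 2) = fun t => (g t ^ 2 - 2 * s * g t) + s ^ 2 := by
    funext t; ring
  rw [this, intervalIntegral.integral_add (hg2.sub (hg.const_mul _)) (by simp),
    intervalIntegral.integral_sub hg2 (hg.const_mul _), intervalIntegral.integral_const_mul,
    intervalIntegral.integral_const]
  simp only [smul_eq_mul]; ring

/-- A continuous function with different values at `p` and `q` stays away in `L²` from the
constants on some subinterval avoiding any given set of at most `k` points. -/
lemma exists_pos_le_integral_sub_const_sq {g : ℝ → ℝ} (k : ℕ) : ∀ {p q : ℝ}, p < q →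
    ContinuousOn g (Icc p q) → g p ≠ g q →
    ∃ δ : ℝ, 0 < δ ∧ ∀ S : Finset ℝ, (S.filter fun z => z ∈ Ioo p q).card ≤ k →
      ∃ p' q' : ℝ, p ≤ p' ∧ p' < q' ∧ q' ≤ q ∧ (∀ z ∈ S, z ∉ Ioo p' q') ∧
        ∀ s : ℝ, δ ≤ ∫ t in p'..q', (g t - s) ^ 2 := by
  induction k with
  | zero =>
    intro p q hpq hg hne
    have hL : 0 < q - p := sub_pos.2 hpq
    have hgu : ContinuousOn g (uIcc p q) := by rwa [uIcc_of_le hpq.le]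
    set mu := (∫ t in p..q, g t) / (q - p) with hmu
    have hint : ∫ t in p..q, g t = mu * (q - p) := by rw [hmu]; field_simp
    refine ⟨∫ t in p..q, (g t - mu) ^ 2, ?_, fun S hS => ⟨p, q, le_rfl, hpq, le_rfl, ?_, ?_⟩⟩
    · refine intervalIntegral.integral_pos hpq ((hg.sub continuousOn_const).pow 2)
        (fun _ _ => sq_nonneg _) ?_
      by_cases h : g p = mu
      · exact ⟨q, right_mem_Icc.2 hpq.le,
          sq_pos_of_ne_zero (sub_ne_zero.2 fun h' => hne (h.trans h'.symm))⟩
      · exact ⟨p, left_mem_Icc.2 hpq.le, sq_pos_of_ne_zero (sub_ne_zero.2 h)⟩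
    · intro z hz hz'
      have := Finset.card_pos.2 ⟨z, Finset.mem_filter.2 ⟨hz, hz'⟩⟩
      exact absurd hS (not_le.2 this)
    · intro s
      rw [integral_sub_const_sq s hgu.intervalIntegrable (hgu.pow 2).intervalIntegrable,
        integral_sub_const_sq mu hgu.intervalIntegrable (hgu.pow 2).intervalIntegrable, hint]
      nlinarith [mul_nonneg hL.le (sq_nonneg (s - mu))]
  | succ k ih =>
    intro p q hpq hg hne
    have hmid : (g p + g q) / 2 ∈ uIcc (g p) (g q) := by
      rw [mem_uIcc]
      rcases le_total (g p) (g q) with h | h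
      · left; constructor <;> linarith
      · right; constructor <;> linarith
    obtain ⟨r, hr, hgr⟩ := intermediate_value_uIcc (by rwa [uIcc_of_le hpq.le]) hmid
    rw [uIcc_of_le hpq.le] at hr
    have h1 : g p ≠ g r := fun h => hne (by linarith)
    have h2 : g r ≠ g q := fun h => hne (by linarith)
    have hpr : p < r := lt_of_le_of_ne hr.1 fun h => h1 (h ▸ rfl)
    have hrq : r < q := lt_of_le_of_ne hr.2 fun h => h2 (h ▸ rfl)
    obtain ⟨δ₁, hδ₁, H₁⟩ := ih hpr (hg.mono (Icc_subset_Icc le_rfl hrq.le)) h1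
    obtain ⟨δ₂, hδ₂, H₂⟩ := ih hrq (hg.mono (Icc_subset_Icc hpr.le le_rfl)) h2
    refine ⟨min δ₁ δ₂, lt_min hδ₁ hδ₂, fun S hS => ?_⟩
    have hcard : (S.filter fun z => z ∈ Ioo p r).card + (S.filter fun z => z ∈ Ioo r q).card
        ≤ k + 1 := by
      rw [← Finset.card_union_of_disjoint]
      · refine (Finset.card_le_card ?_).trans hS
        intro z hz
        simp only [Finset.mem_union, Finset.mem_filter, mem_Ioo] at hz ⊢
        rcases hz with ⟨h, h', h''⟩ | ⟨h, h', h''⟩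
        · exact ⟨h, h', h''.trans hrq⟩
        · exact ⟨h, hpr.trans h', h''⟩
      · rw [Finset.disjoint_left]
        intro z hz hz'
        exact lt_asymm (Finset.mem_filter.1 hz).2.2 (Finset.mem_filter.1 hz').2.1
    rcases le_or_gt (S.filter fun z => z ∈ Ioo p r).card k with h | h
    · obtain ⟨p', q', hp', hpq', hq', hS', H⟩ := H₁ S h
      exact ⟨p', q', hp', hpq', hq'.trans hrq.le, hS', fun s => (min_le_left _ _).trans (H s)⟩
    · obtain ⟨p', q', hp', hpq', hq', hS', H⟩ := H₂ S (by omega)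
      exact ⟨p', q', hpr.le.trans hp', hpq', hq', hS', fun s => (min_le_right _ _).trans (H s)⟩

/-- A continuous nonconstant function stays uniformly away in `L²` from all piecewise constant
functions with a given number of pieces. -/
lemma exists_pos_le_integral_sub_pl_sq {g : ℝ → ℝ} (hg : ContinuousOn g (Icc 0 1))
    {p q : ℝ} (hp : p ∈ Icc (0:ℝ) 1) (hq : q ∈ Icc (0:ℝ) 1) (hne : g p ≠ g q) (N : ℕ) :
    ∃ δ : ℝ, 0 < δ ∧ ∀ (m : Mesh N) (s : Fin N → ℝ),
      δ ≤ ∫ t in (0:ℝ)..1, (g t - (m.pl s).dval t) ^ 2 := by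
  wlog hpq : p < q generalizing p q
  · exact this hq hp hne.symm (lt_of_le_of_ne (not_lt.1 hpq) fun h => hne (h ▸ rfl))
  obtain ⟨δ, hδ, H⟩ := exists_pos_le_integral_sub_const_sq (N + 1) hpq
    (hg.mono (Icc_subset_Icc hp.1 hq.2)) hne
  refine ⟨δ, hδ, fun m s => ?_⟩
  obtain ⟨p', q', hp', hpq', hq', hS, hs⟩ := H ((Finset.range (N + 1)).image m.x)
    ((Finset.card_filter_le _ _).trans (Finset.card_image_le.trans (by simp)))
  have hnode : ∀ i ≤ N, m.x i ∉ Ioo p' q' := fun i hi =>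
    hS _ (Finset.mem_image_of_mem _ (Finset.mem_range.2 (by omega)))
  have h0 := hp.1
  have h1 := hq.2
  obtain ⟨i, hi⟩ := m.exists_mem_Ioc (t := (p' + q') / 2)
    ⟨by linarith, by linarith⟩
  have hi1 : m.x i ≤ p' := by
    by_contra hcon
    push Not at hcon
    exact hnode i i.2.le ⟨hcon, by linarith [hi.1]⟩
  have hi2 : q' ≤ m.x (i + 1) := by
    by_contra hcon
    push Not at hcon
    exact hnode (i + 1) i.2 ⟨by linarith [hi.2], hcon⟩
  have hb : Bdd fun t => (g t - (m.pl s).dval t) ^ 2 :=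
    ((Bdd.of_continuousOn hg).sub (m.bdd_pl s)).sq
  calc δ ≤ ∫ t in p'..q', (g t - s i) ^ 2 := hs (s i)
    _ = ∫ t in p'..q', (g t - (m.pl s).dval t) ^ 2 := by
      refine intervalIntegral.integral_congr_ae (Eventually.of_forall fun t ht => ?_)
      rw [uIoc_of_le hpq'.le] at ht
      rw [m.pl_dval_of_mem s i ⟨hi1.trans_lt ht.1, ht.2.trans hi2⟩]
    _ ≤ ∫ t in (0:ℝ)..1, (g t - (m.pl s).dval t) ^ 2 :=
      intervalIntegral.integral_mono_interval (by linarith) hpq'.le (by linarith)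
        (Eventually.of_forall fun t => sq_nonneg _) hb.integrable

/-- The difference of two `H¹` functions with bounded derivatives. -/
def H1.diff (u v : H1) (hu : Bdd u.dval) (hv : Bdd v.dval) : H1 where
  val t := u.val t - v.val t
  dval t := u.dval t - v.dval t
  dval_meas := u.dval_meas.sub v.dval_meas
  dval_int := (hu.sub hv).integrable
  dval_sq_int := (hu.sub hv).sq.integrable
  ftc x hx := by
    rw [intervalIntegral.integral_sub (hu.intervalIntegrable le_rfl hx.1 hx.2)
      (hv.intervalIntegrable le_rfl hx.1 hx.2), u.ftc x hx, v.ftc x hx]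
    ring

lemma Coeffs.B_diff_left (P : Coeffs) {u v w : H1} (hu : Bdd u.dval) (hv : Bdd v.dval)
    (hw : Bdd w.dval) : P.B (u.diff v hu hv) w = P.B u w - P.B v w := by
  unfold Coeffs.B
  rw [← intervalIntegral.integral_sub (P.bdd_integrand hu hw).integrable
    (P.bdd_integrand hv hw).integrable]
  congr 1
  funext t
  simp only [H1.diff]
  ring

lemma Coeffs.B_diff_right (P : Coeffs) {u v w : H1} (hu : Bdd u.dval) (hv : Bdd v.dval)
    (hw : Bdd w.dval) : P.B w (u.diff v hu hv) = P.B w u - P.B w v := by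
  unfold Coeffs.B
  rw [← intervalIntegral.integral_sub (P.bdd_integrand hw hu).integrable
    (P.bdd_integrand hw hv).integrable]
  congr 1
  funext t
  simp only [H1.diff]
  ring

namespace Mesh

variable {N : ℕ} (m : Mesh N)

lemma avg_nonneg (g : ℝ → ℝ) (i : ℕ) : 0 ≤ m.avg g i := Real.sqrt_nonneg _

lemma alpha_base_nonneg (g : ℝ → ℝ) :
    0 ≤ ∑ i ∈ Finset.range N, m.h i * (m.avg g i) ^ ((2:ℝ)/3) :=
  Finset.sum_nonneg fun i hi => mul_nonneg (m.h_pos (Finset.mem_range.1 hi)).le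
    (Real.rpow_nonneg (m.avg_nonneg g i) _)

lemma alpha_nonneg (g : ℝ → ℝ) : 0 ≤ m.alpha g := pow_nonneg (m.alpha_base_nonneg g) 3

lemma avg_sq (g : ℝ → ℝ) {i : ℕ} (hi : i < N) :
    (m.avg g i) ^ 2 = (m.h i)⁻¹ * ∫ t in (m.x i)..(m.x (i + 1)), g t ^ 2 := by
  unfold Mesh.avg
  rw [Real.sq_sqrt, one_div]
  exact mul_nonneg (one_div_nonneg.2 (m.h_pos hi).le)
    (intervalIntegral.integral_nonneg (m.x_mono i hi).le fun t _ => sq_nonneg _)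

lemma sq_h_mul_integral_le_alpha (g : ℝ → ℝ) {i : ℕ} (hi : i < N) :
    m.h i ^ 2 * ∫ t in (m.x i)..(m.x (i + 1)), g t ^ 2 ≤ m.alpha g := by
  have hh := m.h_pos hi
  have h1 : m.h i * (m.avg g i) ^ ((2:ℝ)/3)
      ≤ ∑ i ∈ Finset.range N, m.h i * (m.avg g i) ^ ((2:ℝ)/3) :=
    Finset.single_le_sum (f := fun i => m.h i * (m.avg g i) ^ ((2:ℝ)/3))
      (fun j hj => mul_nonneg (m.h_pos (Finset.mem_range.1 hj)).le
      (Real.rpow_nonneg (m.avg_nonneg g j) _)) (Finset.mem_range.2 hi)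
  have h2 := pow_le_pow_left₀ (mul_nonneg hh.le (Real.rpow_nonneg (m.avg_nonneg g i) _)) h1 3
  refine le_trans (le_of_eq ?_) h2
  have h3 : ((m.avg g i) ^ ((2:ℝ)/3)) ^ 3 = (m.avg g i) ^ 2 := by
    rw [← Real.rpow_natCast, ← Real.rpow_mul (m.avg_nonneg g i), ← Real.rpow_natCast]
    norm_num
  rw [mul_pow, h3, m.avg_sq g hi]
  field_simp

end Mesh

lemma Coeffs.bdd_res (P : Coeffs) {f : ℝ → ℝ} (hf : Bdd f) {w : H1} (hw : Bdd w.dval) :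
    Bdd (P.res f w) :=
  ((hf.add (P.bdd_a'.mul hw)).sub (P.bdd_b.mul hw)).sub (P.bdd_c.mul w.bdd)

/-- Uniform bound for the derivative of finite element solutions. -/
lemma Mesh.fe_energy_le {N : ℕ} (m : Mesh N) (P : Coeffs) {f : ℝ → ℝ} (hf : Bdd f) {M : ℝ}
    (hM : ∀ᵐ x ∂unitMeasure, |f x| ≤ M) :
    ∫ t in (0:ℝ)..1, (m.fe P f).dval t ^ 2 ≤ (M / P.a0) ^ 2 := by
  obtain ⟨h0, h1, hpl, hB⟩ := m.fe_isFESolution P hf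
  have hbd : Bdd (m.fe P f).dval := m.bdd_pl _
  have hco := P.coercive hbd h0 h1
  rw [hB _ h0 h1 hpl] at hco
  set E := ∫ t in (0:ℝ)..1, (m.fe P f).dval t ^ 2 with hE
  have hE0 : 0 ≤ E := intervalIntegral.integral_nonneg zero_le_one fun t _ => sq_nonneg _
  have h2 : ip f (m.fe P f) ≤ ∫ _ in (0:ℝ)..1, M * √E := by
    refine integral_unit_mono (hf.mul (m.fe P f).bdd) (Bdd.const _) ?_
    filter_upwards [hM, ae_restrict_mem measurableSet_Ioc] with x hx hx1
    refine (le_abs_self _).trans ?_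
    rw [abs_mul]
    exact mul_le_mul hx (Real.abs_le_sqrt ((m.fe P f).sq_val_le h0 (Ioc_subset_Icc_self hx1)))
      (abs_nonneg _) ((abs_nonneg _).trans hx)
  simp only [intervalIntegral.integral_const, sub_zero, one_smul] at h2
  have hM0 : 0 ≤ M := by
    obtain ⟨x, hx⟩ := (show (∃ᵐ x ∂unitMeasure, |f x| ≤ M) from
      have : NeZero unitMeasure := ⟨by simp [unitMeasure, Measure.restrict_eq_zero]⟩
      hM.frequently).exists
    exact (abs_nonneg _).trans hx
  have h3 : P.a0 * √E ≤ M := by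
    rcases hE0.eq_or_lt with h | h
    · rw [← h]; simpa using hM0
    · have hs := Real.sqrt_pos.2 h
      have h4 : P.a0 * (√E * √E) ≤ M * √E := by
        rw [Real.mul_self_sqrt hE0]; exact hco.trans h2
      have : (P.a0 * √E) * √E ≤ M * √E := by linarith
      exact le_of_mul_le_mul_right this hs
  have h5 : √E ≤ M / P.a0 := by
    rw [le_div_iff₀ P.a0_pos]; linarith
  calc E = √E ^ 2 := (Real.sq_sqrt hE0).symm
    _ ≤ _ := pow_le_pow_left₀ (Real.sqrt_nonneg _) h5 2

/-- Uniform bound for the residual of finite element solutions. -/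
lemma Coeffs.exists_integral_res_sq_le (P : Coeffs) {f : ℝ → ℝ} (hf : Bdd f) :
    ∃ C : ℝ, 0 ≤ C ∧ ∀ (N : ℕ) (m : Mesh N),
      ∫ t in (0:ℝ)..1, P.res f (m.fe P f) t ^ 2 ≤ C := by
  obtain ⟨M, hM0, hM⟩ := hf.exists_pos
  obtain ⟨A, hA0, hA⟩ := (P.bdd_a'.sub P.bdd_b).exists_pos
  obtain ⟨L, hL0, hL⟩ := P.bdd_c.exists_pos
  refine ⟨3 * (M ^ 2 + A ^ 2 * (M / P.a0) ^ 2 + L ^ 2 * (M / P.a0) ^ 2), by positivity,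
    fun N m => ?_⟩
  have hE := m.fe_energy_le P hf hM
  obtain ⟨h0, -, -, -⟩ := m.fe_isFESolution P hf
  have hbd : Bdd (m.fe P f).dval := m.bdd_pl _
  have h1 : ∫ t in (0:ℝ)..1, P.res f (m.fe P f) t ^ 2 ≤
      ∫ t in (0:ℝ)..1, (3 * (M ^ 2 + L ^ 2 * (M / P.a0) ^ 2)
        + 3 * A ^ 2 * (m.fe P f).dval t ^ 2) := by
    refine integral_unit_mono (P.bdd_res hf hbd).sq
      ((Bdd.const _).add ((Bdd.const _).mul hbd.sq)) ?_
    filter_upwards [hM, hA, hL, ae_restrict_mem measurableSet_Ioc] with x h1 h2 h3 hx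
    have hv := ((m.fe P f).sq_val_le h0 (Ioc_subset_Icc_self hx)).trans hE
    have e1 : f x ^ 2 ≤ M ^ 2 := sq_le_sq' (abs_le.1 h1).1 (abs_le.1 h1).2
    have e2 : ((P.a' x - P.b x) * (m.fe P f).dval x) ^ 2 ≤ A ^ 2 * (m.fe P f).dval x ^ 2 := by
      rw [mul_pow]
      exact mul_le_mul_of_nonneg_right (sq_le_sq' (abs_le.1 h2).1 (abs_le.1 h2).2) (sq_nonneg _)
    have e3 : (P.c x * (m.fe P f).val x) ^ 2 ≤ L ^ 2 * (M / P.a0) ^ 2 := by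
      rw [mul_pow]
      exact mul_le_mul (sq_le_sq' (abs_le.1 h3).1 (abs_le.1 h3).2) hv (sq_nonneg _)
        (sq_nonneg _)
    have e4 : P.res f (m.fe P f) x = f x + (P.a' x - P.b x) * (m.fe P f).dval x
        - P.c x * (m.fe P f).val x := by
      unfold Coeffs.res; ring
    rw [e4]
    set X := f x
    set Y := (P.a' x - P.b x) * (m.fe P f).dval x
    set Z := P.c x * (m.fe P f).val x
    nlinarith [sq_nonneg (X - Y), sq_nonneg (X + Z), sq_nonneg (Y + Z)]
  rw [intervalIntegral.integral_add (by simp) (hbd.sq.integrable.const_mul _),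
    intervalIntegral.integral_const, intervalIntegral.integral_const_mul] at h1
  simp only [sub_zero, one_smul] at h1
  have : 3 * A ^ 2 * ∫ t in (0:ℝ)..1, (m.fe P f).dval t ^ 2 ≤ 3 * A ^ 2 * (M / P.a0) ^ 2 :=
    mul_le_mul_of_nonneg_left hE (by positivity)
  linarith

end Estimates

section Aposteriori

open Set Filter Topology

namespace Mesh

variable {N : ℕ} (m : Mesh N)

/-- The slopes of the nodal interpolant. -/
def interpSlopes (e : H1) (i : Fin N) : ℝ := (e.val (m.x (i + 1)) - e.val (m.x i)) / m.h i

/-- The interpolation error. -/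
def interpErr (e : H1) (he : Bdd e.dval) : H1 :=
  e.diff (m.pl (m.interpSlopes e)) he (m.bdd_pl _)

lemma interpErr_dval (e : H1) (he : Bdd e.dval) (i : Fin N) {t : ℝ}
    (ht : t ∈ Ioc (m.x i) (m.x (i + 1))) :
    (m.interpErr e he).dval t = e.dval t - m.interpSlopes e i := by
  simp only [interpErr, H1.diff, m.pl_dval_of_mem _ i ht]

lemma prim_elem (v : H1) (i : Fin N) : Prim (m.x i) (m.x (i + 1)) v.val v.dval :=
  v.prim.mono (m.x_nonneg i.2.le) (m.x_mono i i.2).le (m.x_le_one i.2)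

lemma integral_dval_eq (e : H1) (i : Fin N) :
    ∫ t in (m.x i)..(m.x (i + 1)), e.dval t = m.interpSlopes e i * (m.x (i + 1) - m.x i) := by
  have h1 := (m.prim_elem e i).eq _ (right_mem_Icc.2 (m.x_mono i i.2).le)
  have h2 := (m.h_pos i.2).ne'
  rw [interpSlopes, h1, ← Mesh.h]
  field_simp
  ring

lemma interpErr_node (e : H1) (he : Bdd e.dval) (h0 : e.val 0 = 0) {k : ℕ} (hk : k ≤ N) :
    (m.interpErr e he).val (m.x k) = 0 := by
  induction k with
  | zero =>
    rw [m.x_zero]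
    simp only [interpErr, H1.diff, h0, m.pl_val_zero, sub_zero]
  | succ k ih =>
    set i : Fin N := ⟨k, hk⟩
    have hle := (m.x_mono k hk).le
    rw [(m.prim_elem _ i).eq _ (right_mem_Icc.2 hle), ih (Nat.le_of_succ_le hk), zero_add,
      intervalIntegral.integral_congr_ae (g := fun t => e.dval t - m.interpSlopes e i)]
    · rw [intervalIntegral.integral_sub (m.prim_elem e i).int (by simp), m.integral_dval_eq]
      simp [mul_comm]
    · refine Eventually.of_forall fun t ht => ?_
      rw [uIoc_of_le hle] at ht
      exact m.interpErr_dval e he i ht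

lemma sq_interpErr_le (e : H1) (he : Bdd e.dval) (h0 : e.val 0 = 0) (i : Fin N) {x : ℝ}
    (hx : x ∈ Icc (m.x i) (m.x (i + 1))) :
    (m.interpErr e he).val x ^ 2 ≤ m.h i * ∫ t in (0:ℝ)..1, e.dval t ^ 2 := by
  have hle := (m.x_mono i i.2).le
  have hwb : Bdd (m.interpErr e he).dval := he.sub (m.bdd_pl _)
  have hn := m.x_nonneg i.2.le
  have hn1 := m.x_le_one (Nat.succ_le_of_lt i.2)
  rw [(m.prim_elem _ i).eq x hx, m.interpErr_node e he h0 i.2.le, zero_add]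
  have h1 := sq_integral_le hx.1
    (hwb.intervalIntegrable hn hx.1 (hx.2.trans hn1))
    (hwb.sq.intervalIntegrable hn hx.1 (hx.2.trans hn1))
  have h2 : ∫ t in (m.x i)..x, (m.interpErr e he).dval t ^ 2 ≤
      ∫ t in (m.x i)..(m.x (i + 1)), (m.interpErr e he).dval t ^ 2 :=
    intervalIntegral.integral_mono_interval le_rfl hx.1 hx.2
      (Eventually.of_forall fun t => sq_nonneg _) (hwb.sq.intervalIntegrable hn hle hn1)
  have h3 : ∫ t in (m.x i)..(m.x (i + 1)), (m.interpErr e he).dval t ^ 2 ≤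
      ∫ t in (m.x i)..(m.x (i + 1)), e.dval t ^ 2 := by
    rw [intervalIntegral.integral_congr_ae
      (g := fun t => (e.dval t - m.interpSlopes e i) ^ 2)]
    · rw [integral_sub_const_sq _ (he.intervalIntegrable hn hle hn1)
        (he.sq.intervalIntegrable hn hle hn1), m.integral_dval_eq]
      nlinarith [mul_nonneg (sub_nonneg.2 hle) (sq_nonneg (m.interpSlopes e i))]
    · refine Eventually.of_forall fun t ht => ?_
      rw [uIoc_of_le hle] at ht
      simp only [m.interpErr_dval e he i ht]
  have h4 : ∫ t in (m.x i)..(m.x (i + 1)), e.dval t ^ 2 ≤ ∫ t in (0:ℝ)..1, e.dval t ^ 2 :=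
    intervalIntegral.integral_mono_interval hn hle hn1
      (Eventually.of_forall fun t => sq_nonneg _) he.sq.integrable
  have h5 : 0 ≤ ∫ t in (m.x i)..x, (m.interpErr e he).dval t ^ 2 :=
    intervalIntegral.integral_nonneg hx.1 fun t _ => sq_nonneg _
  have h6 : x - m.x i ≤ m.h i := by unfold Mesh.h; linarith [hx.2]
  refine h1.trans ?_
  exact mul_le_mul h6 (h2.trans (h3.trans h4)) h5 (m.h_pos i.2).le

/-- The contribution of one element to the residual functional of the interpolation error. -/
lemma integral_mul_interpErr_le (e : H1) (he : Bdd e.dval) (h0 : e.val 0 = 0) {r : ℝ → ℝ}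
    (hr : Bdd r) (i : Fin N) :
    ∫ t in (m.x i)..(m.x (i + 1)), r t * (m.interpErr e he).val t
      ≤ √(m.alpha r * ∫ t in (0:ℝ)..1, e.dval t ^ 2) := by
  set E := ∫ t in (0:ℝ)..1, e.dval t ^ 2 with hE
  have hE0 : 0 ≤ E := intervalIntegral.integral_nonneg zero_le_one fun t _ => sq_nonneg _
  have hle := (m.x_mono i i.2).le
  have hn := m.x_nonneg i.2.le
  have hn1 := m.x_le_one (Nat.succ_le_of_lt i.2)
  have h1 : ∫ t in (m.x i)..(m.x (i + 1)), r t * (m.interpErr e he).val t ≤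
      ∫ t in (m.x i)..(m.x (i + 1)), |r t| * √(m.h i * E) := by
    refine intervalIntegral.integral_mono_on hle
      ((hr.mul (m.interpErr e he).bdd).intervalIntegrable hn hle hn1)
      ((hr.abs.mul (Bdd.const _)).intervalIntegrable hn hle hn1) fun t ht => ?_
    refine (le_abs_self _).trans ?_
    rw [abs_mul]
    exact mul_le_mul_of_nonneg_left (Real.abs_le_sqrt (m.sq_interpErr_le e he h0 i ht))
      (abs_nonneg _)
  rw [intervalIntegral.integral_mul_const] at h1
  have h2 := sq_integral_le hle (hr.abs.intervalIntegrable hn hle hn1)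
    (hr.abs.sq.intervalIntegrable hn hle hn1)
  simp only [sq_abs] at h2
  refine h1.trans (Real.le_sqrt_of_sq_le ?_)
  rw [mul_pow, Real.sq_sqrt (mul_nonneg (m.h_pos i.2).le hE0)]
  have h3 := m.sq_h_mul_integral_le_alpha r i.2
  have h4 : (m.x (i + 1) - m.x i) = m.h i := rfl
  rw [h4] at h2
  calc _ ≤ (m.h i * ∫ t in (m.x i)..(m.x (i + 1)), r t ^ 2) * (m.h i * E) :=
        mul_le_mul_of_nonneg_right h2 (mul_nonneg (m.h_pos i.2).le hE0)
    _ = (m.h i ^ 2 * ∫ t in (m.x i)..(m.x (i + 1)), r t ^ 2) * E := by ring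
    _ ≤ _ := mul_le_mul_of_nonneg_right h3 hE0

/-- The derivative of a piecewise linear function is orthogonal to derivatives of functions
vanishing at the nodes. -/
lemma integral_pl_mul_eq_zero (P : Coeffs) (s : Fin N → ℝ) (w : H1) (hw : Bdd w.dval)
    (hnode : ∀ k ≤ N, w.val (m.x k) = 0) :
    ∫ t in (0:ℝ)..1, (m.pl s).dval t * (P.a' t * w.val t + P.a t * w.dval t) = 0 := by
  rw [m.integral_eq_sum ((m.bdd_pl s).mul ((P.bdd_a'.mul w.bdd).add (P.bdd_a.mul hw)))]
  refine Finset.sum_eq_zero fun i _ => ?_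
  have hle := (m.x_mono i i.2).le
  rw [intervalIntegral.integral_congr_ae
    (g := fun t => s i * (P.a' t * w.val t + P.a t * w.dval t))]
  · rw [intervalIntegral.integral_const_mul,
      (P.prim_a.mono (m.x_nonneg i.2.le) hle (m.x_le_one i.2)).integral_mul_add
        (m.prim_elem w i) hle, hnode _ i.2.le, hnode _ i.2]
    simp
  · refine Eventually.of_forall fun t ht => ?_
    rw [uIoc_of_le hle] at ht
    rw [m.pl_dval_of_mem s i ht]

/-- A posteriori error estimate in terms of the intensity parameter. -/
lemma energy_error_le (P : Coeffs) {f : ℝ → ℝ} (hf : Bdd f) {u : H1}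
    (hu : P.IsWeakSolution f u) (hub : Bdd u.dval) :
    P.a0 ^ 2 * ∫ t in (0:ℝ)..1, (u.dval t - (m.fe P f).dval t) ^ 2
      ≤ (N:ℝ) ^ 2 * m.alpha (P.res f (m.fe P f)) := by
  obtain ⟨hu0, hu1, huB⟩ := hu
  obtain ⟨h0, h1, -, hB⟩ := m.fe_isFESolution P hf
  have hbd : Bdd (m.fe P f).dval := m.bdd_pl _
  set r := P.res f (m.fe P f) with hr
  have hrb : Bdd r := P.bdd_res hf hbd
  set e : H1 := u.diff (m.fe P f) hub hbd with he
  have heb : Bdd e.dval := hub.sub hbd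
  have he0 : e.val 0 = 0 := by simp only [he, H1.diff, hu0, h0, sub_zero]
  have he1 : e.val 1 = 0 := by simp only [he, H1.diff, hu1, h1, sub_zero]
  set w := m.interpErr e heb with hw
  have hwb : Bdd w.dval := heb.sub (m.bdd_pl _)
  have hwn : ∀ k ≤ N, w.val (m.x k) = 0 := fun k hk => m.interpErr_node e heb he0 hk
  have hw0 : w.val 0 = 0 := by simpa only [m.x_zero] using hwn 0 (Nat.zero_le _)
  have hw1 : w.val 1 = 0 := by simpa only [m.x_last] using hwn N le_rfl
  have hz0 := m.pl_val_zero (m.interpSlopes e)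
  have hz1 : (m.pl (m.interpSlopes e)).val 1 = 0 := by
    have : w.val 1 = e.val 1 - (m.pl (m.interpSlopes e)).val 1 := rfl
    rw [hw1, he1] at this
    linarith
  have hco := P.coercive heb he0 he1
  have hBe : P.B e e = ip f w - P.B (m.fe P f) w := by
    have e1 : P.B e w = P.B e e - P.B e (m.pl (m.interpSlopes e)) :=
      P.B_diff_right heb (m.bdd_pl _) heb
    have e2 : P.B e (m.pl (m.interpSlopes e)) = P.B u (m.pl (m.interpSlopes e))
        - P.B (m.fe P f) (m.pl (m.interpSlopes e)) := P.B_diff_left hub hbd (m.bdd_pl _)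
    have e3 : P.B e w = P.B u w - P.B (m.fe P f) w := P.B_diff_left hub hbd hwb
    rw [huB _ hz0 hz1, hB _ hz0 hz1 (m.pl_isPL _), sub_self] at e2
    rw [huB _ hw0 hw1] at e3
    linarith
  have hres : ip f w - P.B (m.fe P f) w = ∫ t in (0:ℝ)..1, r t * w.val t := by
    have horth := m.integral_pl_mul_eq_zero P (m.slopes P f) w hwb hwn
    have hbI : Bdd fun t => (m.pl (m.slopes P f)).dval t * (P.a' t * w.val t + P.a t * w.dval t) :=
      (m.bdd_pl _).mul ((P.bdd_a'.mul w.bdd).add (P.bdd_a.mul hwb))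
    have hsub : ∫ t in (0:ℝ)..1, r t * w.val t = (∫ t in (0:ℝ)..1, r t * w.val t) -
        ∫ t in (0:ℝ)..1, (m.pl (m.slopes P f)).dval t * (P.a' t * w.val t + P.a t * w.dval t) := by
      rw [horth, sub_zero]
    rw [hsub,
      ← intervalIntegral.integral_sub (hrb.mul w.bdd).integrable hbI.integrable, ip, Coeffs.B,
      ← intervalIntegral.integral_sub (hf.mul w.bdd).integrable (P.bdd_integrand hbd hwb).integrable]
    congr 1
    funext t
    simp only [hr, Coeffs.res, Mesh.fe]
    ring
  set E := ∫ t in (0:ℝ)..1, e.dval t ^ 2 with hE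
  have hE0 : 0 ≤ E := intervalIntegral.integral_nonneg zero_le_one fun t _ => sq_nonneg _
  have ha := m.alpha_nonneg r
  have hmain : P.a0 * E ≤ N * √(m.alpha r * E) := by
    rw [hBe, hres, m.integral_eq_sum (hrb.mul w.bdd)] at hco
    refine hco.trans ?_
    refine (Finset.sum_le_sum fun i _ => m.integral_mul_interpErr_le e heb he0 hrb i).trans ?_
    simp [hE]
  have hsq : (P.a0 * E) ^ 2 ≤ (N:ℝ) ^ 2 * (m.alpha r * E) := by
    have := pow_le_pow_left₀ (mul_nonneg P.a0_pos.le hE0) hmain 2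
    rwa [mul_pow (N:ℝ), Real.sq_sqrt (mul_nonneg ha hE0)] at this
  change P.a0 ^ 2 * E ≤ _
  rcases hE0.eq_or_lt with h | h
  · rw [← h]; simp only [mul_zero]; positivity
  · refine le_of_mul_le_mul_right ?_ h
    linarith [hsq]

end Mesh

/-- The intensity parameter is bounded away from zero. -/
lemma Coeffs.exists_pos_le_alpha (P : Coeffs) {f : ℝ → ℝ} (hf : Bdd f) {u : H1}
    (hu : P.IsWeakSolution f u) (huc : ContinuousOn u.dval (Icc 0 1)) {p q : ℝ}
    (hp : p ∈ Icc (0:ℝ) 1) (hq : q ∈ Icc (0:ℝ) 1) (hne : u.dval p ≠ u.dval q) {N : ℕ}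
    (hN : 0 < N) : ∃ δ : ℝ, 0 < δ ∧ ∀ m : Mesh N, δ ≤ m.alpha (P.res f (m.fe P f)) := by
  obtain ⟨δ, hδ, H⟩ := exists_pos_le_integral_sub_pl_sq huc hp hq hne N
  have ha := P.a0_pos
  have hN' : (0:ℝ) < N := Nat.cast_pos.2 hN
  refine ⟨P.a0 ^ 2 * δ / (N:ℝ) ^ 2, by positivity, fun m => ?_⟩
  rw [div_le_iff₀ (by positivity), mul_comm (m.alpha _)]
  exact (mul_le_mul_of_nonneg_left (H m _) (by positivity)).trans
    (m.energy_error_le P hf hu (.of_continuousOn huc))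

end Aposteriori

section Degenerate

open Set Filter Topology

/-- A smooth function as an element of `H¹`. -/
def H1.ofContDiff (g : ℝ → ℝ) (hg : ContDiff ℝ 1 g) : H1 where
  val := g
  dval := deriv g
  dval_meas := measurable_deriv g
  dval_int := (hg.continuous_deriv le_rfl).intervalIntegrable _ _
  dval_sq_int := ((hg.continuous_deriv le_rfl).pow 2).intervalIntegrable _ _
  ftc x _ := by
    rw [intervalIntegral.integral_deriv_eq_sub
      (fun t _ => (hg.differentiable one_ne_zero).differentiableAt)
      ((hg.continuous_deriv le_rfl).intervalIntegrable _ _)]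
    ring

/-- A function orthogonal to `H¹₀` vanishes almost everywhere. -/
lemma ae_eq_zero_of_ip_eq_zero {f : ℝ → ℝ} (hf : Bdd f)
    (h : ∀ v : H1, v.val 0 = 0 → v.val 1 = 0 → ip f v = 0) : ∀ᵐ x ∂unitMeasure, f x = 0 := by
  have hint : IntegrableOn f (Ioc 0 1) := hf.integrable.1
  have key := isOpen_Ioo.ae_eq_zero_of_integral_contDiff_smul_eq_zero (U := Ioo (0:ℝ) 1)
    (μ := volume) (f := f) (hint.mono_set Ioo_subset_Ioc_self).locallyIntegrableOn ?_
  · rw [unitMeasure, ← restrict_Ioo_eq_restrict_Ioc, ae_restrict_iff' measurableSet_Ioo]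
    exact key
  · intro g hg _ hsupp
    have hz : ∀ x, x ∉ Ioo (0:ℝ) 1 → g x = 0 := fun x hx =>
      image_eq_zero_of_notMem_tsupport fun hx' => hx (hsupp hx')
    have hv := h (H1.ofContDiff g (hg.of_le (by exact_mod_cast le_top)))
      (hz 0 (by simp)) (hz 1 (by simp))
    rw [ip, intervalIntegral.integral_of_le zero_le_one] at hv
    rw [← setIntegral_eq_integral_of_forall_compl_eq_zero (s := Ioc (0:ℝ) 1)]
    · refine Eq.trans ?_ hv
      simp only [H1.ofContDiff, smul_eq_mul, mul_comm]
    · intro x hx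
      rw [hz x fun hx' => hx (Ioo_subset_Ioc_self hx'), zero_smul]

lemma Coeffs.IsWeakSolution.ae_eq_zero {P : Coeffs} {f : ℝ → ℝ} (hf : Bdd f) {u : H1}
    (hu : P.IsWeakSolution f u) (hc : ∀ x ∈ Icc (0:ℝ) 1, u.dval x = u.dval 0) :
    ∀ᵐ x ∂unitMeasure, f x = 0 := by
  obtain ⟨h0, h1, hB⟩ := hu
  have hval : ∀ x ∈ Icc (0:ℝ) 1, u.val x = x * u.dval 0 := by
    intro x hx
    rw [u.ftc x hx, h0, zero_add, intervalIntegral.integral_congr (g := fun _ => u.dval 0)]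
    · simp
    · intro t ht
      rw [uIcc_of_le hx.1] at ht
      exact hc t ⟨ht.1, ht.2.trans hx.2⟩
  have hd : u.dval 0 = 0 := by
    have := hval 1 (right_mem_Icc.2 zero_le_one)
    rw [h1] at this
    linarith
  refine ae_eq_zero_of_ip_eq_zero hf fun v hv0 hv1 => ?_
  rw [← hB v hv0 hv1, Coeffs.B]
  have : EqOn (fun t => P.a t * u.dval t * v.dval t + P.b t * u.dval t * v.val t
      + P.c t * u.val t * v.val t) (fun _ => 0) (uIcc 0 1) := by
    intro t ht
    rw [uIcc_of_le zero_le_one] at ht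
    simp [hc t ht, hval t ht, hd]
  rw [intervalIntegral.integral_congr this]
  simp

/-- The uniform mesh. -/
def uniformMesh (N : ℕ) (hN : 0 < N) : Mesh N where
  x k := k / N
  x_zero := by simp
  x_last := div_self (Nat.cast_ne_zero.2 hN.ne')
  x_mono i _ := by
    have : (0:ℝ) < N := Nat.cast_pos.2 hN
    gcongr
    simp

lemma exists_equidistributing_of_ae_eq_zero (P : Coeffs) {f : ℝ → ℝ}
    (hf : ∀ᵐ x ∂unitMeasure, f x = 0) {N : ℕ} (hN : 0 < N) :
    ∃ (m : Mesh N) (uh : H1), P.IsFESolution f m uh ∧ m.IsEquidistributing (P.res f uh) := by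
  set m := uniformMesh N hN with hm
  have hd : ∀ t, (m.pl 0).dval t = 0 := fun t => by simp [Mesh.pl]
  have hv : ∀ t, (m.pl 0).val t = 0 := fun t => by simp [Mesh.pl]
  refine ⟨m, m.pl 0, ⟨hv 0, hv 1, m.pl_isPL 0, fun v _ _ _ => ?_⟩, ?_⟩
  · have h1 : P.B (m.pl 0) v = 0 := by simp [Coeffs.B, hd, hv]
    rw [h1, ip, intervalIntegral.integral_of_le zero_le_one]
    symm
    refine integral_eq_zero_of_ae ?_
    filter_upwards [hf] with x hx
    simp [hx]
  · have hr : P.res f (m.pl 0) = f := by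
      funext t
      simp [Coeffs.res, hd, hv]
    rw [hr]
    have havg : ∀ i < N, m.avg f i = 0 := by
      intro i hi
      have : ∫ t in (m.x i)..(m.x (i + 1)), f t ^ 2 = 0 := by
        rw [intervalIntegral.integral_of_le (m.x_mono i hi).le]
        refine integral_eq_zero_of_ae ?_
        filter_upwards [ae_restrict_of_ae_restrict_of_subset
          (Ioc_subset_Ioc (m.x_nonneg hi.le) (m.x_le_one hi)) hf] with x hx
        simp [hx]
      simp [Mesh.avg, this]
    have hrho : ∀ i < N, m.rho f i = 1 := by
      intro i hi
      simp [Mesh.rho, havg i hi]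
    have hsig : m.sigma f = 1 := by
      rw [Mesh.sigma, Finset.sum_range, ← m.sum_h]
      exact Finset.sum_congr rfl fun i _ => by rw [hrho i i.2, one_mul]
    intro i hi
    rw [hrho i hi, hsig, one_mul, Mesh.h, hm]
    simp only [uniformMesh, Nat.cast_add, Nat.cast_one]
    ring

end Degenerate

section Continuity

open Set Filter Topology

variable {Y : Type*} [TopologicalSpace Y]

/-- Families of uniformly bounded functions on the unit interval depending continuously on a
parameter, almost everywhere. -/
structure BddFamily (F : Y → ℝ → ℝ) : Prop where
  meas : ∀ y, AEStronglyMeasurable (F y) unitMeasure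
  bound : ∃ C : ℝ, ∀ y, ∀ᵐ t ∂unitMeasure, |F y t| ≤ C
  cont : ∀ y, ∀ᵐ t ∂unitMeasure, ContinuousAt (fun z => F z t) y

namespace BddFamily

variable {F G : Y → ℝ → ℝ}

lemma of_bdd {g : ℝ → ℝ} (hg : Bdd g) : BddFamily fun _ : Y => g :=
  ⟨fun _ => hg.meas, hg.bound.imp fun _ h _ => h,
    fun _ => Eventually.of_forall fun _ => continuousAt_const⟩

lemma of_continuous [CompactSpace Y] {s : Y → ℝ} (hs : Continuous s) :
    BddFamily fun y _ => s y := by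
  obtain ⟨C, hC⟩ := isCompact_univ.exists_bound_of_continuousOn hs.continuousOn
  exact ⟨fun _ => aestronglyMeasurable_const,
    ⟨C, fun y => Eventually.of_forall fun _ => hC y (mem_univ y)⟩,
    fun _ => Eventually.of_forall fun _ => hs.continuousAt⟩

lemma add (hF : BddFamily F) (hG : BddFamily G) : BddFamily fun y t => F y t + G y t := by
  obtain ⟨C, hC⟩ := hF.bound
  obtain ⟨D, hD⟩ := hG.bound
  refine ⟨fun y => (hF.meas y).add (hG.meas y), ⟨C + D, fun y => ?_⟩, fun y => ?_⟩
  · filter_upwards [hC y, hD y] with t h1 h2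
    exact (abs_add_le _ _).trans (add_le_add h1 h2)
  · filter_upwards [hF.cont y, hG.cont y] with t h1 h2
    exact h1.add h2

lemma mul (hF : BddFamily F) (hG : BddFamily G) : BddFamily fun y t => F y t * G y t := by
  obtain ⟨C, hC⟩ := hF.bound
  obtain ⟨D, hD⟩ := hG.bound
  refine ⟨fun y => (hF.meas y).mul (hG.meas y), ⟨C * D, fun y => ?_⟩, fun y => ?_⟩
  · filter_upwards [hC y, hD y] with t h1 h2
    rw [abs_mul]
    exact mul_le_mul h1 h2 (abs_nonneg _) ((abs_nonneg _).trans h1)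
  · filter_upwards [hF.cont y, hG.cont y] with t h1 h2
    exact h1.mul h2

lemma sub (hF : BddFamily F) (hG : BddFamily G) : BddFamily fun y t => F y t - G y t := by
  have := hF.add ((of_bdd (Bdd.const (-1))).mul hG)
  simpa only [neg_mul, one_mul, ← sub_eq_add_neg] using this

lemma sum {ι : Type*} (s : Finset ι) {F : ι → Y → ℝ → ℝ} (hF : ∀ i ∈ s, BddFamily (F i)) :
    BddFamily fun y t => ∑ i ∈ s, F i y t := by
  classical
  induction s using Finset.induction_on with
  | empty => simpa using of_bdd (Bdd.const 0)
  | insert i s hi ih =>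
    simp only [Finset.sum_insert hi]
    exact (hF i (Finset.mem_insert_self _ _)).add
      (ih fun j hj => hF j (Finset.mem_insert_of_mem hj))

lemma chi {p q : Y → ℝ} (hp : Continuous p) (hq : Continuous q) :
    BddFamily fun y => chi (p y) (q y) := by
  refine ⟨fun y => (bdd_chi _ _).meas, ⟨1, fun y => Eventually.of_forall (abs_chi_le _ _)⟩,
    fun y => ?_⟩
  filter_upwards [ae_restrict_of_ae ((countable_singleton (p y)).ae_notMem volume),
    ae_restrict_of_ae ((countable_singleton (q y)).ae_notMem volume)] with t h1 h2
  rcases lt_or_gt_of_ne h1 with h1 | h1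
  · refine continuousAt_const.congr (f := fun _ => (0:ℝ)) ?_
    filter_upwards [hp.continuousAt.eventually (lt_mem_nhds h1)] with z hz
    exact (chi_of_notMem fun h => lt_asymm h.1 hz).symm
  rcases lt_or_gt_of_ne h2 with h2 | h2
  · refine continuousAt_const.congr (f := fun _ => (1:ℝ)) ?_
    filter_upwards [hp.continuousAt.eventually (gt_mem_nhds h1),
      hq.continuousAt.eventually (lt_mem_nhds h2)] with z hz hz'
    exact (chi_of_mem ⟨hz, hz'.le⟩).symm
  · refine continuousAt_const.congr (f := fun _ => (0:ℝ)) ?_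
    filter_upwards [hq.continuousAt.eventually (gt_mem_nhds h2)] with z hz
    exact (chi_of_notMem fun h => not_lt.2 h.2 hz).symm

lemma ell {p q : Y → ℝ} (hp : Continuous p) (hq : Continuous q) (hpq : ∀ y, p y ≤ q y)
    (h1 : ∀ y, q y - p y ≤ 1) : BddFamily fun y => ell (p y) (q y) := by
  refine ⟨fun y => (bdd_ell _ _).meas,
    ⟨1, fun y => Eventually.of_forall (abs_ell_le (hpq y) (h1 y))⟩,
    fun y => Eventually.of_forall fun t => ?_⟩
  unfold EquidMesh.ell
  fun_prop

lemma continuous_integral [FirstCountableTopology Y] (hF : BddFamily F) :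
    Continuous fun y => ∫ t in (0:ℝ)..1, F y t := by
  obtain ⟨C, hC⟩ := hF.bound
  rw [continuous_iff_continuousAt]
  intro y
  simp only [intervalIntegral.integral_of_le zero_le_one]
  exact continuousAt_of_dominated (bound := fun _ => C) (Eventually.of_forall hF.meas)
    (Eventually.of_forall hC) (integrable_const C) (hF.cont y)

end BddFamily

lemma integral_eq_integral_chi_mul {g : ℝ → ℝ} {p q : ℝ} (hp : 0 ≤ p) (hpq : p ≤ q)
    (hq : q ≤ 1) : ∫ t in p..q, g t = ∫ t in (0:ℝ)..1, chi p q t * g t := by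
  rw [intervalIntegral.integral_of_le hpq, intervalIntegral.integral_of_le zero_le_one]
  have : (fun t => chi p q t * g t) = (Ioc p q).indicator g := by
    funext t
    by_cases h : t ∈ Ioc p q
    · simp [chi_of_mem h, h]
    · simp [chi_of_notMem h, h]
  rw [this, setIntegral_indicator measurableSet_Ioc,
    inter_eq_self_of_subset_right (Ioc_subset_Ioc hp hq)]

variable {N : ℕ} {m : Y → Mesh N}

lemma Mesh.bddFamily_chi (hm : ∀ k, Continuous fun y => (m y).x k) (i : Fin N) :
    BddFamily fun y => chi ((m y).x i) ((m y).x (i + 1)) := .chi (hm _) (hm _)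

lemma Mesh.bddFamily_ell (hm : ∀ k, Continuous fun y => (m y).x k) (i : Fin N) :
    BddFamily fun y => ell ((m y).x i) ((m y).x (i + 1)) :=
  .ell (hm _) (hm _) (fun y => ((m y).x_mono i i.2).le) fun y => (m y).h_le_one i.2

lemma Mesh.continuous_slopes [FirstCountableTopology Y] (P : Coeffs) {f : ℝ → ℝ} (hf : Bdd f)
    (hm : ∀ k, Continuous fun y => (m y).x k) (i : Fin N) :
    Continuous fun y => (m y).slopes P f i := by
  have hchi := Mesh.bddFamily_chi hm
  have hell := Mesh.bddFamily_ell hm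
  refine continuous_constrainedSolution (fun i j => ?_) (fun i => ?_) (fun i => ?_)
    (fun y => (m y).sum_h) (fun y => (m y).eq_zero_of_B_le P) i
  · exact (((((BddFamily.of_bdd P.bdd_a).mul (hchi j)).mul (hchi i)).add
      (((BddFamily.of_bdd P.bdd_b).mul (hchi j)).mul (hell i))).add
      (((BddFamily.of_bdd P.bdd_c).mul (hell j)).mul (hell i))).continuous_integral
  · exact ((BddFamily.of_bdd hf).mul (hell i)).continuous_integral
  · exact (hm _).sub (hm _)

lemma Mesh.continuous_avg_res [FirstCountableTopology Y] [CompactSpace Y] (P : Coeffs)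
    {f : ℝ → ℝ} (hf : Bdd f) (hm : ∀ k, Continuous fun y => (m y).x k) (i : Fin N) :
    Continuous fun y => (m y).avg (P.res f ((m y).fe P f)) i := by
  have hchi := Mesh.bddFamily_chi hm
  have hell := Mesh.bddFamily_ell hm
  have hs := fun i => BddFamily.of_continuous (Mesh.continuous_slopes P hf hm i)
  have hd : BddFamily fun y => ((m y).fe P f).dval :=
    BddFamily.sum Finset.univ fun j _ => (hs j).mul (hchi j)
  have hv : BddFamily fun y => ((m y).fe P f).val :=
    BddFamily.sum Finset.univ fun j _ => (hs j).mul (hell j)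
  have hr : BddFamily fun y => P.res f ((m y).fe P f) :=
    (((BddFamily.of_bdd hf).add ((BddFamily.of_bdd P.bdd_a').mul hd)).sub
      ((BddFamily.of_bdd P.bdd_b).mul hd)).sub ((BddFamily.of_bdd P.bdd_c).mul hv)
  have hI : Continuous fun y =>
      ∫ t in ((m y).x i)..((m y).x (i + 1)), (P.res f ((m y).fe P f) t) ^ 2 := by
    have := ((hchi i).mul (hr.mul hr)).continuous_integral
    refine this.congr fun y => ?_
    rw [integral_eq_integral_chi_mul ((m y).x_nonneg i.2.le) ((m y).x_mono i i.2).le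
      ((m y).x_le_one i.2)]
    simp only [pow_two]
  have hh : Continuous fun y => (m y).h i := (hm _).sub (hm _)
  unfold Mesh.avg
  exact ((continuous_const.div hh fun y => ((m y).h_pos i.2).ne').mul hI).sqrt

end Continuity

section Existence

open Set Filter Topology

namespace Mesh

variable {N : ℕ} (m : Mesh N)

lemma one_le_rho (g : ℝ → ℝ) (i : ℕ) : 1 ≤ m.rho g i := by
  refine Real.one_le_rpow ?_ (by norm_num)
  have := mul_nonneg (inv_nonneg.2 (m.alpha_nonneg g)) (sq_nonneg (m.avg g i))
  linarith

lemma one_le_sigma (g : ℝ → ℝ) : 1 ≤ m.sigma g := by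
  rw [Mesh.sigma, Finset.sum_range, ← m.sum_h]
  exact Finset.sum_le_sum fun i _ => le_mul_of_one_le_left (m.h_pos i.2).le (m.one_le_rho g i)

lemma rho_mul_h_pow (g : ℝ → ℝ) {i : ℕ} (hi : i < N) :
    (m.rho g i * m.h i) ^ 3 = m.h i ^ 3 + (m.alpha g)⁻¹ * (m.h i ^ 2 *
      ∫ t in (m.x i)..(m.x (i + 1)), g t ^ 2) := by
  have h1 : m.rho g i ^ 3 = 1 + (m.alpha g)⁻¹ * (m.avg g i) ^ 2 := by
    have h0 : 0 ≤ 1 + (m.alpha g)⁻¹ * (m.avg g i) ^ 2 :=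
      add_nonneg zero_le_one (mul_nonneg (inv_nonneg.2 (m.alpha_nonneg g)) (sq_nonneg _))
    rw [Mesh.rho, ← Real.rpow_natCast, ← Real.rpow_mul h0]
    norm_num
  have h2 := (m.h_pos hi).ne'
  rw [mul_pow, h1, m.avg_sq g hi]
  field_simp

lemma rho_mul_h_le {g : ℝ → ℝ} (hg : Bdd g) {C δ : ℝ} (hδ : 0 < δ)
    (hC : ∫ t in (0:ℝ)..1, g t ^ 2 ≤ C) (hα : δ ≤ m.alpha g) {i : ℕ} (hi : i < N)
    (hh : m.h i ^ 2 * (1 + C / δ) ≤ (1 / (N:ℝ)) ^ 3) : m.rho g i * m.h i ≤ 1 / N := by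
  have hpos := m.h_pos hi
  have h1 : ∫ t in (m.x i)..(m.x (i + 1)), g t ^ 2 ≤ C :=
    (intervalIntegral.integral_mono_interval (m.x_nonneg hi.le) (m.x_mono i hi).le
      (m.x_le_one hi) (Eventually.of_forall fun t => sq_nonneg _) hg.sq.integrable).trans hC
  have h0 : 0 ≤ ∫ t in (m.x i)..(m.x (i + 1)), g t ^ 2 :=
    intervalIntegral.integral_nonneg (m.x_mono i hi).le fun t _ => sq_nonneg _
  refine le_of_pow_le_pow_left₀ three_ne_zero (by positivity) (le_trans ?_ hh)
  rw [m.rho_mul_h_pow g hi]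
  have h2 : (m.alpha g)⁻¹ * (m.h i ^ 2 * ∫ t in (m.x i)..(m.x (i + 1)), g t ^ 2)
      ≤ δ⁻¹ * (m.h i ^ 2 * C) :=
    mul_le_mul (inv_anti₀ hδ hα) (mul_le_mul_of_nonneg_left h1 (sq_nonneg _))
      (mul_nonneg (sq_nonneg _) h0) (inv_nonneg.2 hδ.le)
  have h3 : m.h i ^ 3 ≤ m.h i ^ 2 := pow_le_pow_of_le_one hpos.le (m.h_le_one hi) (by norm_num)
  calc _ ≤ m.h i ^ 2 + δ⁻¹ * (m.h i ^ 2 * C) := add_le_add h3 h2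
    _ = _ := by ring

/-- Element lengths of the mesh parametrized by a point of the simplex. -/
def simplexH (ε : ℝ) (y : stdSimplex ℝ (Fin N)) (i : Fin N) : ℝ := ε + (1 - N * ε) * y.1 i

/-- The mesh with minimal element length `ε` parametrized by a point of the simplex. -/
def ofSimplex (ε : ℝ) (hε : 0 < ε) (hN : N * ε ≤ 1) (y : stdSimplex ℝ (Fin N)) : Mesh N where
  x k := ∑ i : Fin N, if (i : ℕ) < k then simplexH ε y i else 0
  x_zero := by simp
  x_last := by
    simp only [Fin.is_lt, if_true, simplexH, Finset.sum_add_distrib, ← Finset.mul_sum, y.2.2]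
    simp
  x_mono k hk := by
    refine Finset.sum_lt_sum (fun i _ => ?_) ⟨⟨k, hk⟩, Finset.mem_univ _, ?_⟩
    · have : 0 ≤ simplexH ε y i :=
        add_nonneg hε.le (mul_nonneg (sub_nonneg.2 hN) (y.2.1 i))
      split_ifs <;> first | exact le_rfl | exact this | omega
    · have : 0 < simplexH ε y ⟨k, hk⟩ :=
        add_pos_of_pos_of_nonneg hε (mul_nonneg (sub_nonneg.2 hN) (y.2.1 _))
      simpa using this

lemma ofSimplex_h {ε : ℝ} (hε : 0 < ε) (hN : N * ε ≤ 1) (y : stdSimplex ℝ (Fin N)) (i : Fin N) :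
    (ofSimplex ε hε hN y).h i = simplexH ε y i := by
  simp only [Mesh.h, ofSimplex, ← Finset.sum_sub_distrib]
  rw [Finset.sum_eq_single i]
  · simp
  · intro j _ hj
    have : (j : ℕ) ≠ i := fun h => hj (Fin.ext h)
    split_ifs <;> first | omega | simp
  · simp

lemma continuous_ofSimplex_x {ε : ℝ} (hε : 0 < ε) (hN : N * ε ≤ 1) (k : ℕ) :
    Continuous fun y : stdSimplex ℝ (Fin N) => (ofSimplex ε hε hN y).x k := by
  simp only [ofSimplex]
  refine continuous_finsetSum _ fun i _ => ?_
  split_ifs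
  · unfold simplexH
    exact continuous_const.add (continuous_const.mul
      ((continuous_apply i).comp continuous_subtype_val))
  · exact continuous_const

end Mesh

lemma exists_equidistributing (P : Coeffs) {f : ℝ → ℝ} (hf : Bdd f) {N : ℕ} (hN : 0 < N) {δ : ℝ}
    (hδ : 0 < δ) (hα : ∀ m : Mesh N, δ ≤ m.alpha (P.res f (m.fe P f))) :
    ∃ m : Mesh N, m.IsEquidistributing (P.res f (m.fe P f)) := by
  obtain ⟨C, hC0, hC⟩ := P.exists_integral_res_sq_le hf
  have hN1 : (1:ℝ) ≤ N := Nat.one_le_cast.2 hN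
  have hN0 : (0:ℝ) < N := Nat.cast_pos.2 hN
  have : Nonempty (Fin N) := ⟨⟨0, hN⟩⟩
  have hD : 1 ≤ 1 + C / δ := le_add_of_nonneg_right (by positivity)
  obtain ⟨ε, hε, hNε, hεD⟩ : ∃ ε : ℝ, 0 < ε ∧ N * ε ≤ 1 ∧
      ε ^ 2 * (1 + C / δ) ≤ (1 / (N:ℝ)) ^ 3 := by
    set D := 1 + C / δ with hDdef
    have hD0 : 0 < D := by linarith
    refine ⟨1 / (N ^ 2 * D), by positivity, ?_, ?_⟩
    · rw [mul_one_div, div_le_one (by positivity)]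
      nlinarith [mul_le_mul hN1 hD zero_le_one hN0.le]
    · rw [div_pow, div_pow, one_pow, one_pow, div_mul_eq_mul_div, one_mul,
        div_le_div_iff₀ (by positivity) (by positivity)]
      have : (N:ℝ) ^ 3 ≤ N ^ 4 * D := by
        have h1 : (N:ℝ) ^ 3 ≤ N ^ 4 := pow_le_pow_right₀ hN1 (by norm_num)
        nlinarith [pow_pos hN0 4]
      nlinarith
  set m := Mesh.ofSimplex (N := N) ε hε hNε with hm
  set r := fun y => P.res f ((m y).fe P f) with hr
  have hmc : ∀ k, Continuous fun y => (m y).x k := Mesh.continuous_ofSimplex_x hε hNε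
  have hhc : ∀ i, Continuous fun y => (m y).h i := fun i => (hmc _).sub (hmc _)
  have havg : ∀ i : Fin N, Continuous fun y => (m y).avg (r y) i :=
    Mesh.continuous_avg_res P hf hmc
  have hac : Continuous fun y => (m y).alpha (r y) := by
    unfold Mesh.alpha
    simp only [Finset.sum_range]
    exact (continuous_finsetSum Finset.univ fun (i : Fin N) _ => (hhc i).mul
      ((havg i).rpow_const fun _ => Or.inr (by norm_num))).pow 3
  have hrc : ∀ i : Fin N, Continuous fun y => (m y).rho (r y) i := by
    intro i
    unfold Mesh.rho
    exact (continuous_const.add ((hac.inv₀ fun y => (hδ.trans_le (hα (m y))).ne').mul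
      ((havg i).pow 2))).rpow_const fun _ => Or.inr (by norm_num)
  have hsc : Continuous fun y => (m y).sigma (r y) := by
    unfold Mesh.sigma
    simp only [Finset.sum_range]
    exact continuous_finsetSum _ fun i _ => (hrc i).mul (hhc i)
  have hs1 : ∀ y, 1 ≤ (m y).sigma (r y) := fun y => (m y).one_le_sigma (r y)
  have hs0 : ∀ y, 0 < (m y).sigma (r y) := fun y => zero_lt_one.trans_le (hs1 y)
  set G : stdSimplex ℝ (Fin N) → Fin N → ℝ :=
    fun y i => (m y).rho (r y) i * (m y).h i / (m y).sigma (r y) with hG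
  have hGsum : ∀ y, ∑ i, G y i = ∑ _i : Fin N, 1 / (N:ℝ) := by
    intro y
    simp only [hG, ← Finset.sum_div]
    rw [← Finset.sum_range (fun i => (m y).rho (r y) i * (m y).h i)]
    change (m y).sigma (r y) / _ = _
    rw [div_self (hs0 y).ne']
    simp [hN0.ne']
  obtain ⟨y, hy⟩ := exists_mem_of_closed_cover (fun i => {y | G y i ≤ 1 / N})
    (fun i => isClosed_le (((hrc i).mul (hhc i)).div hsc fun y => (hs0 y).ne') continuous_const)
    (fun y => by
      obtain ⟨i, -, hi⟩ := Finset.exists_le_of_sum_le Finset.univ_nonempty (hGsum y).le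
      exact ⟨i, hi⟩)
    (fun y i hyi => by
      have hh : (m y).h i = ε := by
        rw [hm, Mesh.ofSimplex_h]
        simp [Mesh.simplexH, hyi]
      have h1 := (m y).rho_mul_h_le (P.bdd_res hf ((m y).bdd_pl _)) hδ (hC N (m y)) (hα (m y))
        i.2 (by rwa [hh])
      exact (div_le_self (mul_nonneg (zero_le_one.trans ((m y).one_le_rho _ _))
        ((m y).h_pos i.2).le) (hs1 y)).trans h1)
  refine ⟨m y, fun i hi => ?_⟩
  have heq := (Finset.sum_eq_sum_iff_of_le fun i _ => hy i).1 (hGsum y) ⟨i, hi⟩ (Finset.mem_univ _)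
  simp only [hG] at heq
  rw [div_eq_iff (hs0 y).ne'] at heq
  rw [heq]
  ring

end Existence

/-- existence of equidistributing meshes (Theorem 2.4). -/
theorem statement5 (P : Coeffs) (f : ℝ → ℝ) (hf2 : MemL2 f) (hfinf : MemLinf f)
    (u : H1) (hu : P.IsWeakSolution f u) (hu2 : u.IsH2) :
    ∃ N₀ : ℕ, ∀ N : ℕ, N₀ ≤ N →
      ∃ (m : Mesh N) (uh : H1), P.IsFESolution f m uh ∧
        m.IsEquidistributing (P.res f uh) := by
  have hf : Bdd f := .of_Ioo hfinf.1 hfinf.2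
  refine ⟨1, fun N hN => ?_⟩
  by_cases hc : ∀ x ∈ Set.Icc (0:ℝ) 1, u.dval x = u.dval 0
  · exact exists_equidistributing_of_ae_eq_zero P (hu.ae_eq_zero hf hc) hN
  · push Not at hc
    obtain ⟨p, hp, hne⟩ := hc
    obtain ⟨δ, hδ, hα⟩ := P.exists_pos_le_alpha hf hu hu2.continuousOn hp
      (Set.left_mem_Icc.2 zero_le_one) hne hN
    obtain ⟨m, hm⟩ := exists_equidistributing P hf hN hδ hα
    exact ⟨m, m.fe P f, m.fe_isFESolution P hf, hm⟩

end EquidMesh
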